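/- arXiv:1812.10269 — 2 statements merged into one kernel-verified Lean document; each statement's English description precedes it below -/
import Mathlib

section
/- Let b ≥ 2 and let Z ⊆ ℝ^m × ℝ^n be a semi-algebraic set of complexity at most b. For each y ∈ ℝ^n define R_y = {x ∈ ℝ^m : (x,y) ∈ Z}. Then the range space (ℝ^m, {R_y : y ∈ ℝ^n}) has VC dimension at most 200·n²·log₂ b. -/
open MvPolynomial

/-- A set `S ⊆ ℝ^d` is semi-algebraic of complexity at most `b`: it is the locus of points
satisfying a Boolean formula with at most `b` atoms of the form `P(x) < 0` or `P(x) = 0`,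
where each `P` is a `d`-variate real polynomial of degree at most `b`. -/
def IsSemiAlgebraicOfComplexity (d b : ℕ) (S : Set (Fin d → ℝ)) : Prop :=
  ∃ (P : Fin b → MvPolynomial (Fin d) ℝ) (τ : Fin b → Bool) (φ : (Fin b → Prop) → Prop),
    (∀ i, (P i).totalDegree ≤ b) ∧
    S = {x | φ fun i => if τ i then eval x (P i) < 0 else eval x (P i) = 0}

/-- A finite set `A` is shattered by the range family `R`. -/
def Shatters {X : Type*} (R : Set (Set X)) (A : Finset X) : Prop :=
  ∀ B ⊆ A, ∃ r ∈ R, r ∩ ↑A = ↑B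

/-- The range space `(X, R)` has VC dimension at most `v`. -/
def VCDimLE {X : Type*} (R : Set (Set X)) (v : ℝ) : Prop :=
  ∀ A : Finset X, Shatters R A → (A.card : ℝ) ≤ v

/-!
A shattered set `A` of points turns the `b` polynomials defining `Z` into `b|A|` polynomials in `y`
of degree at most `b`, whose sign vector at `y` determines `R_y ∩ A`. They must therefore realize
at least `2^|A|` sign vectors, whereas by a theorem of Warren they realize at most
`(4|A|b² + 1)^n`; taking logarithms bounds `|A|`.

For Warren's theorem, replacing each `fᵢ` by the pair `fᵢ ± δ` with `δ` small reduces to sign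
vectors without zeros. Let `Q = ∏ fᵢ²`, of degree at most an even number `d`. For small `ε > 0` the
polynomial `p = Q - ε ∑ⱼ xⱼ^(d+2)` is positive at a chosen point of each sign cell, while it is
nonpositive on the boundary of the cell and near infinity, so `p` has a local maximum in the cell.
The critical points of `p` solve `ε (d+2) xⱼ^(d+1) = ∂ⱼQ`, where `∂ⱼQ` has degree at most `d`; hence
modulo the ideal of these equations every polynomial reduces to one with all exponents at most `d`.
As evaluations at distinct points are linearly independent (they are distinct characters of the
polynomial ring), there are at most `(d+1)^n` critical points.
-/

open Filter Topology Asymptotics Bornology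

section Degree

variable {R σ τ : Type*} [CommSemiring R]

lemma totalDegree_pderiv_le (p : MvPolynomial σ R) (i : σ) :
    (pderiv i p).totalDegree ≤ p.totalDegree - 1 := by
  refine Finset.sup_le (s := (pderiv i p).support) fun s hs => Nat.le_sub_one_of_lt ?_
  have hcoeff : s + Finsupp.single i 1 ∈ p.support := by
    rw [mem_support_iff, coeff_pderiv] at hs
    exact mem_support_iff.2 (left_ne_zero_of_mul hs)
  have hdeg : (s + Finsupp.single i 1).degree ≤ p.totalDegree := le_totalDegree hcoeff
  rwa [map_add, Finsupp.degree_single] at hdeg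

lemma totalDegree_bind₁_le {h : σ → MvPolynomial τ R} {k : ℕ} (hh : ∀ j, (h j).totalDegree ≤ k)
    (p : MvPolynomial σ R) : (bind₁ h p).totalDegree ≤ p.totalDegree * k := by
  rw [← aeval_eq_bind₁, aeval_def, eval₂_eq]
  refine totalDegree_finsetSum_le fun s hs => ?_
  calc (algebraMap R (MvPolynomial τ R) (p.coeff s) * ∏ j ∈ s.support, h j ^ s j).totalDegree
      ≤ (C (p.coeff s) : MvPolynomial τ R).totalDegree
          + (∏ j ∈ s.support, h j ^ s j).totalDegree := totalDegree_mul _ _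
    _ ≤ 0 + ∑ j ∈ s.support, s j * k := by
        rw [totalDegree_C]
        gcongr
        refine (totalDegree_finsetProd _ _).trans (Finset.sum_le_sum fun j _ => ?_)
        exact (totalDegree_pow _ _).trans (Nat.mul_le_mul_left _ (hh j))
    _ = s.degree * k := by rw [zero_add, Finsupp.degree_apply, Finset.sum_mul]
    _ ≤ p.totalDegree * k := Nat.mul_le_mul_right _ (le_totalDegree hs)

lemma eval_psum [Fintype σ] (x : σ → R) (k : ℕ) : eval x (psum σ R k) = ∑ i, x i ^ k := by
  simp [psum]

lemma pderiv_psum [Fintype σ] (i : σ) (k : ℕ) :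
    pderiv i (psum σ R k) = (k : MvPolynomial σ R) * X i ^ (k - 1) := by
  rw [psum, map_sum, Finset.sum_eq_single i]
  · simp
  · intro j _ hj
    simp [pderiv_X_of_ne hj]
  · simp

end Degree

section ReductionOfDegree

variable {σ : Type*} {d : ℕ}

lemma restrictDegree_sup_span_X_pow_sub_eq_top {R : Type*} [CommRing R]
    {g : σ → MvPolynomial σ R} (hg : ∀ i, (g i).totalDegree ≤ d) :
    restrictDegree σ R d ⊔
      (Ideal.span (Set.range fun i => X i ^ (d + 1) - g i)).restrictScalars R = ⊤ := by
  set I := Ideal.span (Set.range fun i => X i ^ (d + 1) - g i)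
  set M := restrictDegree σ R d ⊔ I.restrictScalars R
  suffices h : ∀ (k : ℕ) (p : MvPolynomial σ R), p.totalDegree < k → p ∈ M from
    eq_top_iff.2 fun p _ => h _ p (Nat.lt_succ_self _)
  intro k
  induction k with
  | zero => exact fun p hp => absurd hp (Nat.not_lt_zero _)
  | succ k ih =>
    intro p hp
    rw [p.as_sum]
    refine Submodule.sum_mem _ fun s hs => ?_
    by_cases hsd : ∀ i, s i ≤ d
    · exact Submodule.mem_sup_left ((monomial_mem_restrictSupport R).2 (.inl hsd))
    push Not at hsd
    obtain ⟨i, hi⟩ := hsd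
    obtain ⟨s', rfl⟩ : ∃ s', s = s' + Finsupp.single i (d + 1) :=
      ⟨_, (tsub_add_cancel_of_le (Finsupp.single_le_iff.2 hi)).symm⟩
    set c := p.coeff (s' + Finsupp.single i (d + 1))
    have hsplit : monomial (s' + Finsupp.single i (d + 1)) c
        = monomial s' c * (X i ^ (d + 1) - g i) + monomial s' c * g i := by
      rw [← mul_add, sub_add_cancel, X_pow_eq_monomial, monomial_mul, mul_one]
    have hdeg : (monomial s' c * g i).totalDegree < k := by
      have hs' : (s' + Finsupp.single i (d + 1)).degree ≤ p.totalDegree := le_totalDegree hs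
      rw [map_add, Finsupp.degree_single] at hs'
      have hmul := totalDegree_mul (monomial s' c) (g i)
      have hmon : (monomial s' c).totalDegree ≤ s'.degree := totalDegree_monomial_le s' c
      have hgi := hg i
      omega
    rw [hsplit]
    refine Submodule.add_mem _ (Submodule.mem_sup_right ?_) (ih _ hdeg)
    exact I.mul_mem_left _ (Ideal.subset_span ⟨i, rfl⟩)

variable {K : Type*} [Field K] [Fintype σ]

lemma linearIndependent_prod_pow_of_pow_eq {g : σ → MvPolynomial σ K}
    (hg : ∀ i, (g i).totalDegree ≤ d) :
    LinearIndependent K fun (x : {x : σ → K | ∀ i, x i ^ (d + 1) = eval x (g i)})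
      (s : σ → Fin (d + 1)) => ∏ i, x.1 i ^ (s i : ℕ) := by
  set Z := {x : σ → K | ∀ i, x i ^ (d + 1) = eval x (g i)}
  have hchar : LinearIndependent K fun (x : Z) (p : MvPolynomial σ K) => eval x.1 p := by
    refine (linearIndependent_monoidHom (MvPolynomial σ K) K).comp
      (fun x : Z => (eval x.1 : MvPolynomial σ K →* K)) fun x y hxy => Subtype.ext ?_
    funext i
    simpa using DFunLike.congr_fun hxy (X i)
  rw [linearIndependent_iff'] at hchar ⊢
  intro t c hc
  refine hchar t c ?_
  let L : MvPolynomial σ K →ₗ[K] K := ∑ x ∈ t, c x • (aeval x.1).toLinearMap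
  have hL (p : MvPolynomial σ K) : L p = ∑ x ∈ t, c x * eval x.1 p := by
    simp [L]
  have hreduced : restrictDegree σ K d ≤ LinearMap.ker L := by
    rw [restrictDegree, restrictSupport_eq_span, Submodule.span_le]
    rintro _ ⟨s, hs, rfl⟩
    have := congr_fun hc fun i => ⟨s i, Nat.lt_succ_of_le (hs i)⟩
    simpa [hL, eval_monomial, Finsupp.prod_fintype] using this
  have hideal : (Ideal.span (Set.range fun i => X i ^ (d + 1) - g i)).restrictScalars K
      ≤ LinearMap.ker L := by
    intro p hp
    rw [LinearMap.mem_ker, hL]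
    refine Finset.sum_eq_zero fun x _ => mul_eq_zero_of_right _ ?_
    refine (Ideal.span_le.2 ?_ : _ ≤ RingHom.ker (eval x.1)) hp
    rintro _ ⟨i, rfl⟩
    simpa [RingHom.mem_ker, sub_eq_zero] using x.2 i
  have hker : LinearMap.ker L = ⊤ :=
    top_le_iff.1 (restrictDegree_sup_span_X_pow_sub_eq_top hg ▸ sup_le hreduced hideal)
  funext p
  simpa [hL] using LinearMap.mem_ker.1 (hker ▸ Submodule.mem_top : p ∈ LinearMap.ker L)

lemma encard_setOf_pow_eq_le {g : σ → MvPolynomial σ K} (hg : ∀ i, (g i).totalDegree ≤ d) :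
    {x : σ → K | ∀ i, x i ^ (d + 1) = eval x (g i)}.encard
      ≤ ((d + 1) ^ Fintype.card σ : ℕ) := by
  classical
  have hind := linearIndependent_prod_pow_of_pow_eq hg
  have := hind.finite
  have := Fintype.ofFinite {x : σ → K | ∀ i, x i ^ (d + 1) = eval x (g i)}
  rw [← Set.coe_fintypeCard, Nat.cast_le]
  refine hind.fintype_card_le_finrank.trans_eq ?_
  rw [Module.finrank_fintype_fun_eq_card, Fintype.card_fun, Fintype.card_fin]

end ReductionOfDegree

section CriticalPoints

variable {σ : Type*}

/-- The critical points of a polynomial function: the common zeros of its formal partial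
derivatives. -/
def criticalPoints {R : Type*} [CommSemiring R] (p : MvPolynomial σ R) : Set (σ → R) :=
  {x | ∀ i, eval x (pderiv i p) = 0}

lemma hasLineDerivAt_eval {𝕜 : Type*} [NontriviallyNormedField 𝕜] [DecidableEq σ]
    (p : MvPolynomial σ 𝕜) (x : σ → 𝕜) (i : σ) :
    HasLineDerivAt 𝕜 (fun y => eval y p) (eval x (pderiv i p)) x (Pi.single i 1) := by
  unfold HasLineDerivAt
  induction p using MvPolynomial.induction_on with
  | C a => simpa using hasDerivAt_const (0 : 𝕜) a
  | add p q hp hq => simpa only [map_add] using hp.fun_add hq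
  | mul_X p j hp =>
    have hX : HasDerivAt (fun t : 𝕜 => (x + t • (Pi.single i 1 : σ → 𝕜)) j)
        ((Pi.single i 1 : σ → 𝕜) j) 0 := by
      simpa using ((hasDerivAt_id (0 : 𝕜)).mul_const ((Pi.single i 1 : σ → 𝕜) j)).const_add (x j)
    simp only [map_mul, eval_X]
    refine (hp.fun_mul hX).congr_deriv ?_
    obtain rfl | hij := eq_or_ne i j
    · simp [add_comm, mul_comm]
    · simp [pderiv_X_of_ne hij.symm, hij.symm, mul_comm]

lemma mem_criticalPoints_of_isLocalExtr {p : MvPolynomial σ ℝ} {x : σ → ℝ}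
    (hx : IsLocalExtr (fun y => eval y p) x) : x ∈ criticalPoints p := by
  classical
  exact fun i => hx.hasLineDerivAt_eq_zero (hasLineDerivAt_eval p x i)

variable [Fintype σ]

lemma encard_criticalPoints_sub_psum_le {K : Type*} [Field K] [CharZero K]
    {Q : MvPolynomial σ K} {d : ℕ} (hQ : Q.totalDegree ≤ d + 1) {ε : K} (hε : ε ≠ 0) :
    (criticalPoints (Q - C ε * psum σ K (d + 2))).encard
      ≤ ((d + 1) ^ Fintype.card σ : ℕ) := by
  have hc : ε * ((d + 2 : ℕ) : K) ≠ 0 := mul_ne_zero hε (Nat.cast_ne_zero.2 (by omega))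
  set g : σ → MvPolynomial σ K := fun i => C (ε * ((d + 2 : ℕ) : K))⁻¹ * pderiv i Q
  have hg (i : σ) : (g i).totalDegree ≤ d := by
    have hmul : (g i).totalDegree ≤ _ := totalDegree_mul _ _
    have hder := totalDegree_pderiv_le Q i
    rw [totalDegree_C] at hmul
    omega
  refine (Set.encard_le_encard fun x hx i => ?_).trans (encard_setOf_pow_eq_le hg)
  have hcrit : eval x (pderiv i Q) = ε * ((d + 2 : ℕ) : K) * x i ^ (d + 1) := by
    simpa [pderiv_C_mul, pderiv_psum, sub_eq_zero, mul_assoc] using hx i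
  rw [map_mul, eval_C, hcrit, inv_mul_cancel_left₀ hc]

end CriticalPoints

section Growth

variable {σ : Type*} [Fintype σ]

lemma norm_eval_le {𝕜 : Type*} [NormedField 𝕜] (p : MvPolynomial σ 𝕜) {x : σ → 𝕜}
    (hx : 1 ≤ ‖x‖) : ‖eval x p‖ ≤ (∑ s ∈ p.support, ‖p.coeff s‖) * ‖x‖ ^ p.totalDegree := by
  rw [eval_eq, Finset.sum_mul]
  refine norm_sum_le_of_le _ fun s hs => ?_
  rw [norm_mul, norm_prod]
  gcongr
  calc ∏ i ∈ s.support, ‖x i ^ s i‖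
      ≤ ∏ i ∈ s.support, ‖x‖ ^ s i := by
        gcongr with i
        rw [norm_pow]
        gcongr
        exact norm_le_pi_norm x i
    _ = ‖x‖ ^ s.degree := Finset.prod_pow_eq_pow_sum _ _ _
    _ ≤ ‖x‖ ^ p.totalDegree := pow_le_pow_right₀ hx (le_totalDegree hs)

lemma isBigO_eval_cobounded {𝕜 : Type*} [NormedField 𝕜] (p : MvPolynomial σ 𝕜) :
    (fun x => eval x p) =O[cobounded (σ → 𝕜)] fun x => ‖x‖ ^ p.totalDegree := by
  refine .of_bound (∑ s ∈ p.support, ‖p.coeff s‖) ?_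
  filter_upwards [tendsto_norm_cobounded_atTop.eventually_ge_atTop 1] with x hx
  simpa using norm_eval_le p hx

lemma norm_pow_le_sum_pow {m : ℕ} (hm : Even m) (hm0 : m ≠ 0) (x : σ → ℝ) :
    ‖x‖ ^ m ≤ ∑ i, x i ^ m := by
  cases isEmpty_or_nonempty σ
  · simp [Subsingleton.elim x 0, hm0]
  obtain ⟨j, hj⟩ := Finite.exists_max fun i => ‖x i‖
  calc ‖x‖ ^ m ≤ ‖x j‖ ^ m := by
        gcongr
        exact (pi_norm_le_iff_of_nonempty _).2 hj
    _ = x j ^ m := by rw [Real.norm_eq_abs, hm.pow_abs]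
    _ ≤ ∑ i, x i ^ m :=
        Finset.single_le_sum (fun i _ => hm.pow_nonneg (x i)) (Finset.mem_univ j)

lemma eventually_eval_sub_psum_nonpos {Q : MvPolynomial σ ℝ} {m : ℕ} (hm : Even m)
    (hQ : Q.totalDegree < m) {ε : ℝ} (hε : 0 < ε) :
    ∀ᶠ x in cocompact (σ → ℝ), eval x (Q - C ε * psum σ ℝ m) ≤ 0 := by
  have hlittle : (fun x => eval x Q) =o[cobounded (σ → ℝ)] fun x => ‖x‖ ^ m :=
    (isBigO_eval_cobounded Q).trans_isLittleO
      ((isLittleO_pow_pow_atTop_of_lt hQ).comp_tendsto tendsto_norm_cobounded_atTop)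
  rw [← Metric.cobounded_eq_cocompact]
  filter_upwards [hlittle.bound hε] with x hx
  rw [map_sub, map_mul, eval_C, eval_psum, sub_nonpos]
  calc eval x Q ≤ ‖eval x Q‖ := Real.le_norm_self _
    _ ≤ ε * ‖x‖ ^ m := by simpa using hx
    _ ≤ ε * ∑ i, x i ^ m := by
        gcongr
        exact norm_pow_le_sum_pow hm (by omega) x

end Growth

lemma exists_mem_isLocalMax_of_forall_frontier_lt {X α : Type*} [TopologicalSpace X]
    [LinearOrder α] [TopologicalSpace α] [ClosedIciTopology α] {F : X → α} {U : Set X} {v : X}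
    (hF : Continuous F) (hv : v ∈ U) (hinf : ∀ᶠ x in cocompact X, F x ≤ F v)
    (hfrontier : ∀ x ∈ frontier U, F x < F v) : ∃ x ∈ U, IsLocalMax F x := by
  obtain ⟨x, hx, hmax⟩ := hF.continuousOn.exists_isMaxOn' isClosed_closure (subset_closure hv)
    (hinf.filter_mono inf_le_left)
  have hinterior : x ∈ interior U := by
    rw [← closure_sdiff_frontier]
    exact ⟨hx, fun hxU => (hfrontier x hxU).not_ge (hmax (subset_closure hv))⟩
  exact ⟨x, interior_subset hinterior, hmax.isLocalMax <|
    mem_of_superset (mem_interior_iff_mem_nhds.1 hinterior) subset_closure⟩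

section SignVectors

variable {σ ι : Type*} {f : ι → MvPolynomial σ ℝ}

/-- The sign vector, or sign condition, that a family of polynomials realizes at a point. -/
noncomputable def signVector (f : ι → MvPolynomial σ ℝ) (x : σ → ℝ) : ι → SignType :=
  fun i => SignType.sign (eval x (f i))

lemma continuousAt_signVector {x : σ → ℝ} (hx : ∀ i, eval x (f i) ≠ 0) :
    ContinuousAt (signVector f) x :=
  continuousAt_pi.2 fun i =>
    (continuousAt_sign_of_ne_zero (hx i)).comp (f := fun y => eval y (f i))
      (continuous_eval (f i)).continuousAt

lemma exists_eval_eq_zero_of_mem_frontier [Finite ι] {s : ι → SignType} {x : σ → ℝ}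
    (hx : x ∈ frontier {y | signVector f y = s}) : ∃ i, eval x (f i) = 0 := by
  by_contra! hne
  have hlocal : ∀ᶠ y in 𝓝 x, signVector f y = signVector f x :=
    continuousAt_signVector hne (mem_nhds_discrete.2 (Set.mem_singleton _))
  rw [frontier_eq_closure_inter_closure] at hx
  obtain ⟨y, hys, hyx⟩ := ((mem_closure_iff_frequently.1 hx.1).and_eventually hlocal).exists
  obtain ⟨z, hzs, hzx⟩ := ((mem_closure_iff_frequently.1 hx.2).and_eventually hlocal).exists
  exact hzs (hzx.trans (hyx.symm.trans hys))

lemma exists_mem_criticalPoints_signVector_eq [Finite ι] {p : MvPolynomial σ ℝ} {v : σ → ℝ}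
    (hinf : ∀ᶠ x in cocompact (σ → ℝ), eval x p ≤ 0)
    (hzero : ∀ x i, eval x (f i) = 0 → eval x p ≤ 0) (hv : 0 < eval v p) :
    ∃ x ∈ criticalPoints p, signVector f x = signVector f v := by
  obtain ⟨x, hxv, hmax⟩ := exists_mem_isLocalMax_of_forall_frontier_lt
    (U := {y | signVector f y = signVector f v}) (continuous_eval p) rfl
    (hinf.mono fun x hx => hx.trans hv.le) fun x hx => by
      obtain ⟨i, hi⟩ := exists_eval_eq_zero_of_mem_frontier hx
      exact (hzero x i hi).trans_lt hv
  exact ⟨x, mem_criticalPoints_of_isLocalExtr (.inr hmax), hxv⟩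

variable [Fintype σ]

lemma eventually_exists_mem_criticalPoints_sub_psum_signVector_eq [Finite ι]
    {Q : MvPolynomial σ ℝ} {m : ℕ} (hm : Even m) (hQ : Q.totalDegree < m)
    (hzero : ∀ x i, eval x (f i) = 0 → eval x Q ≤ 0) {v : σ → ℝ} (hv : 0 < eval v Q) :
    ∀ᶠ ε in 𝓝[>] (0 : ℝ), ∃ x ∈ criticalPoints (Q - C ε * psum σ ℝ m),
      signVector f x = signVector f v := by
  have hpsum (x : σ → ℝ) : 0 ≤ eval x (psum σ ℝ m) := by
    rw [eval_psum]
    exact Finset.sum_nonneg fun i _ => hm.pow_nonneg (x i)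
  have hlim : Tendsto (fun ε => eval v (Q - C ε * psum σ ℝ m)) (𝓝[>] 0) (𝓝 (eval v Q)) := by
    refine (Continuous.tendsto' ?_ 0 _ ?_).mono_left nhdsWithin_le_nhds
    · simp only [map_sub, map_mul, eval_C]
      fun_prop
    · simp
  filter_upwards [hlim.eventually_const_lt hv, self_mem_nhdsWithin] with ε hεv hε
  refine exists_mem_criticalPoints_signVector_eq (eventually_eval_sub_psum_nonpos hm hQ hε)
    (fun x i hi => ?_) hεv
  rw [map_sub, map_mul, eval_C, sub_nonpos]
  exact (hzero x i hi).trans (mul_nonneg hε.le (hpsum x))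

variable [Fintype ι]

lemma encard_image_signVector_le (f : ι → MvPolynomial σ ℝ) :
    (signVector f '' {x | ∀ i, eval x (f i) ≠ 0}).encard
      ≤ ((2 * ∑ i, (f i).totalDegree + 1) ^ Fintype.card σ : ℕ) := by
  set d := 2 * ∑ i, (f i).totalDegree
  set Q := ∏ i, f i ^ 2
  have hQ : Q.totalDegree ≤ d := by
    calc Q.totalDegree ≤ ∑ i, (f i ^ 2).totalDegree := totalDegree_finsetProd _ _
      _ ≤ ∑ i, 2 * (f i).totalDegree := Finset.sum_le_sum fun i _ => totalDegree_pow _ _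
      _ = d := (Finset.mul_sum _ _ _).symm
  have hzero (x : σ → ℝ) (i : ι) (hi : eval x (f i) = 0) : eval x Q ≤ 0 := by
    rw [map_prod, Finset.prod_eq_zero (Finset.mem_univ i) (by simp [hi])]
  have hpos (v : σ → ℝ) (hv : ∀ i, eval v (f i) ≠ 0) : 0 < eval v Q := by
    rw [map_prod]
    exact Finset.prod_pos fun i _ => by simpa [sq_pos_iff] using hv i
  have hcover : ∀ᶠ ε in 𝓝[>] (0 : ℝ), ∀ s ∈ signVector f '' {x | ∀ i, eval x (f i) ≠ 0},
      s ∈ signVector f '' criticalPoints (Q - C ε * psum σ ℝ (d + 2)) := by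
    refine (eventually_all_finite (Set.toFinite _)).2 ?_
    rintro _ ⟨v, hv, rfl⟩
    exact eventually_exists_mem_criticalPoints_sub_psum_signVector_eq
      ((even_two_mul _).add even_two) (by omega) hzero (hpos v hv)
  obtain ⟨ε, hε, hε0⟩ := (hcover.and self_mem_nhdsWithin).exists
  calc (signVector f '' {x | ∀ i, eval x (f i) ≠ 0}).encard
      ≤ (signVector f '' criticalPoints (Q - C ε * psum σ ℝ (d + 2))).encard :=
        Set.encard_le_encard hε
    _ ≤ (criticalPoints (Q - C ε * psum σ ℝ (d + 2))).encard := Set.encard_image_le _ _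
    _ ≤ ((d + 1) ^ Fintype.card σ : ℕ) :=
        encard_criticalPoints_sub_psum_le (hQ.trans d.le_succ) (ne_of_gt hε0)

lemma eventually_sign_eq_ite_sign_add_sign_sub {α : Type*} [Field α] [LinearOrder α]
    [IsStrictOrderedRing α] [TopologicalSpace α] [OrderTopology α] (z : α) :
    ∀ᶠ δ in 𝓝[>] (0 : α), z + δ ≠ 0 ∧ z - δ ≠ 0 ∧ SignType.sign z =
      if SignType.sign (z + δ) = SignType.sign (z - δ) then SignType.sign (z + δ) else 0 := by
  obtain rfl | hz := eq_or_ne z 0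
  · filter_upwards [self_mem_nhdsWithin] with δ (hδ : 0 < δ)
    simp [hδ, hδ.ne']
  · have hsmall : ∀ᶠ δ in 𝓝[>] (0 : α), δ < |z| :=
      (gt_mem_nhds (abs_pos.2 hz)).filter_mono nhdsWithin_le_nhds
    filter_upwards [hsmall, self_mem_nhdsWithin] with δ hδz (hδ : 0 < δ)
    rcases hz.lt_or_gt with hneg | hpos
    · rw [abs_of_neg hneg] at hδz
      have hadd : z + δ < 0 := by linarith
      have hsub : z - δ < 0 := by linarith
      simp [sign_neg, hneg, hadd, hsub, hadd.ne, hsub.ne]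
    · rw [abs_of_pos hpos] at hδz
      have hadd : 0 < z + δ := by linarith
      have hsub : 0 < z - δ := by linarith
      simp [sign_pos, hpos, hadd, hsub, hadd.ne', hsub.ne']

lemma encard_range_signVector_le (f : ι → MvPolynomial σ ℝ) :
    (Set.range (signVector f)).encard
      ≤ ((4 * ∑ i, (f i).totalDegree + 1) ^ Fintype.card σ : ℕ) := by
  let F (δ : ℝ) : ι ⊕ ι → MvPolynomial σ ℝ := Sum.elim (fun i => f i + C δ) fun i => f i - C δ
  let decode (s : ι ⊕ ι → SignType) (i : ι) : SignType :=
    if s (.inl i) = s (.inr i) then s (.inl i) else 0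
  have hdeg (δ : ℝ) : 2 * ∑ j, (F δ j).totalDegree ≤ 4 * ∑ i, (f i).totalDegree := by
    have hadd (i : ι) : (f i + C δ).totalDegree ≤ (f i).totalDegree := by
      simpa using totalDegree_add (f i) (C δ)
    have hsub (i : ι) : (f i - C δ).totalDegree ≤ (f i).totalDegree :=
      totalDegree_sub_C_le (f i) δ
    have := Finset.sum_le_sum fun i (_ : i ∈ Finset.univ) => hadd i
    have := Finset.sum_le_sum fun i (_ : i ∈ Finset.univ) => hsub i
    simp only [F, Fintype.sum_sum_type, Sum.elim_inl, Sum.elim_inr]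
    omega
  have hcover : ∀ᶠ δ in 𝓝[>] (0 : ℝ), ∀ s ∈ Set.range (signVector f),
      s ∈ decode '' (signVector (F δ) '' {x | ∀ j, eval x (F δ j) ≠ 0}) := by
    refine (eventually_all_finite (Set.toFinite _)).2 ?_
    rintro _ ⟨v, rfl⟩
    filter_upwards [eventually_all.2 fun i =>
      eventually_sign_eq_ite_sign_add_sign_sub (eval v (f i))] with δ hδ
    refine ⟨_, ⟨v, Sum.forall.2 ⟨fun i => ?_, fun i => ?_⟩, rfl⟩, funext fun i => ?_⟩
    · simpa [F] using (hδ i).1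
    · simpa [F] using (hδ i).2.1
    · simpa [F, decode, signVector] using (hδ i).2.2.symm
  obtain ⟨δ, hδ⟩ := hcover.exists
  calc (Set.range (signVector f)).encard
      ≤ (signVector (F δ) '' {x | ∀ j, eval x (F δ j) ≠ 0}).encard :=
        (Set.encard_le_encard hδ).trans (Set.encard_image_le _ _)
    _ ≤ ((2 * ∑ j, (F δ j).totalDegree + 1) ^ Fintype.card σ : ℕ) :=
        encard_image_signVector_le (F δ)
    _ ≤ ((4 * ∑ i, (f i).totalDegree + 1) ^ Fintype.card σ : ℕ) :=
        Nat.cast_le.2 (Nat.pow_le_pow_left (Nat.succ_le_succ (hdeg δ)) _)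

end SignVectors

section Shattering

lemma Shatters.two_pow_card_le_encard_range {X Y T : Type*} {r : Y → Set X} {A : Finset X}
    (hA : Shatters {s | ∃ y, s = r y} A) {g : Y → T}
    (hg : ∀ y y', g y = g y' → r y ∩ A = r y' ∩ A) :
    (2 ^ A.card : ℕ) ≤ (Set.range g).encard := by
  have htrace (B : Finset X) : ∃ y, B ⊆ A → r y ∩ A = B := by
    by_cases hB : B ⊆ A
    · obtain ⟨_, ⟨y, rfl⟩, hy⟩ := hA B hB
      exact ⟨y, fun _ => hy⟩
    · obtain ⟨_, ⟨y, rfl⟩, -⟩ := hA ∅ A.empty_subset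
      exact ⟨y, fun h => absurd h hB⟩
  choose y hy using htrace
  rw [← Finset.card_powerset, ← Set.encard_coe_eq_coe_finsetCard]
  refine Set.encard_le_encard_of_injOn (f := fun B => g (y B)) (fun B _ => ⟨y B, rfl⟩)
    fun B hB B' hB' hBB' => ?_
  rw [← Finset.coe_inj, ← hy B (Finset.mem_powerset.1 hB), ← hy B' (Finset.mem_powerset.1 hB')]
  exact hg _ _ hBB'

variable {m n : ℕ}

/-- The polynomial `p(a, ·)` in the last `n` variables, obtained by evaluating the first `m`
variables at `a`. -/
noncomputable def fiberPolynomial {R : Type*} [CommSemiring R] (a : Fin m → R)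
    (p : MvPolynomial (Fin (m + n)) R) : MvPolynomial (Fin n) R :=
  bind₁ (Fin.append (fun j => C (a j)) X) p

lemma eval_fiberPolynomial {R : Type*} [CommSemiring R] (a : Fin m → R) (y : Fin n → R)
    (p : MvPolynomial (Fin (m + n)) R) :
    eval y (fiberPolynomial a p) = eval (Fin.append a y) p := by
  rw [fiberPolynomial, eval, eval₂Hom_bind₁]
  congr 2
  ext j
  cases j using Fin.addCases <;> simp

lemma totalDegree_fiberPolynomial_le {R : Type*} [CommSemiring R] (a : Fin m → R)
    (p : MvPolynomial (Fin (m + n)) R) :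
    (fiberPolynomial a p).totalDegree ≤ p.totalDegree := by
  refine (totalDegree_bind₁_le (k := 1) (fun j => ?_) p).trans_eq (mul_one _)
  cases j using Fin.addCases with
  | left j => simp
  | right j =>
    rw [Fin.append_right]
    exact (totalDegree_monomial_le (Finsupp.single j 1) (1 : R)).trans_eq
      (Finsupp.degree_single j 1)

lemma Shatters.two_pow_card_le_of_signVector {ι : Type*} [Fintype ι]
    {P : ι → MvPolynomial (Fin (m + n)) ℝ} {Ψ : (ι → SignType) → Prop} {A : Finset (Fin m → ℝ)}
    (hA : Shatters
      {r | ∃ y : Fin n → ℝ, r = {x : Fin m → ℝ | Ψ (signVector P (Fin.append x y))}} A) :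
    2 ^ A.card ≤ (4 * (A.card * ∑ i, (P i).totalDegree) + 1) ^ n := by
  let F (q : A × ι) : MvPolynomial (Fin n) ℝ := fiberPolynomial q.1 (P q.2)
  have hF (y : Fin n → ℝ) (x : A) (i : ι) :
      signVector F y (x, i) = signVector P (Fin.append x.1 y) i := by
    simp only [signVector, F, eval_fiberPolynomial]
  have hdeg : ∑ q, (F q).totalDegree ≤ A.card * ∑ i, (P i).totalDegree := by
    calc ∑ q, (F q).totalDegree ≤ ∑ q : A × ι, (P q.2).totalDegree :=
          Finset.sum_le_sum fun q _ => totalDegree_fiberPolynomial_le _ _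
      _ = A.card * ∑ i, (P i).totalDegree := by simp [Fintype.sum_prod_type]
  have htrace (y y' : Fin n → ℝ) (h : signVector F y = signVector F y') :
      {x | Ψ (signVector P (Fin.append x y))} ∩ (A : Set (Fin m → ℝ))
        = {x | Ψ (signVector P (Fin.append x y'))} ∩ A := by
    ext x
    refine and_congr_left fun hx => ?_
    have hsign : signVector P (Fin.append x y) = signVector P (Fin.append x y') :=
      funext fun i => by simpa only [hF] using congr_fun h (⟨x, hx⟩, i)
    simp only [Set.mem_ofPred_eq, hsign]
  have hcount := (hA.two_pow_card_le_encard_range htrace).trans (encard_range_signVector_le F)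
  rw [Nat.cast_le, Fintype.card_fin] at hcount
  exact hcount.trans (Nat.pow_le_pow_left (by omega) n)

end Shattering

lemma IsSemiAlgebraicOfComplexity.exists_signVector {d b : ℕ} {S : Set (Fin d → ℝ)}
    (hS : IsSemiAlgebraicOfComplexity d b S) :
    ∃ (P : Fin b → MvPolynomial (Fin d) ℝ) (Ψ : (Fin b → SignType) → Prop),
      (∀ i, (P i).totalDegree ≤ b) ∧ ∀ x, x ∈ S ↔ Ψ (signVector P x) := by
  obtain ⟨P, τ, φ, hP, rfl⟩ := hS
  refine ⟨P, fun s => φ fun i => if τ i then s i = -1 else s i = 0, hP, fun x => ?_⟩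
  simp only [signVector, sign_eq_neg_one_iff, sign_eq_zero_iff, Set.mem_ofPred_eq]

lemma logb_two_le_self {t : ℝ} (ht : 0 < t) : Real.logb 2 t ≤ t := by
  have hlog : Real.log t - Real.log 2 ≤ t / 2 - 1 := by
    rw [← Real.log_div ht.ne' two_ne_zero]
    exact Real.log_le_sub_one_of_pos (half_pos ht)
  rw [Real.logb, div_le_iff₀ (Real.log_pos one_lt_two)]
  nlinarith [Real.log_two_gt_d9, Real.log_two_lt_d9]

lemma le_two_mul_mul_logb_of_two_pow_le {c k n : ℕ} (h : 2 ^ k ≤ (c * k) ^ n) :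
    (k : ℝ) ≤ 2 * n * Real.logb 2 (2 * n * c) := by
  obtain rfl | hn := Nat.eq_zero_or_pos n
  · simpa [Nat.lt_one_iff] using k.lt_two_pow_self.trans_le h
  have hck : 0 < c * k := Nat.pos_of_ne_zero fun h0 => by simp [h0, hn.ne'] at h
  have hc : 0 < (c : ℝ) := Nat.cast_pos.2 (Nat.pos_of_mul_pos_right hck)
  have hk : 0 < (k : ℝ) := Nat.cast_pos.2 (Nat.pos_of_mul_pos_left hck)
  have hlog : (k : ℝ) ≤ n * Real.logb 2 (c * k) := by
    have := Real.logb_le_logb_of_le one_lt_two (by positivity) (Nat.cast_le (α := ℝ).2 h)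
    simpa [Real.logb_pow] using this
  have hsplit : Real.logb 2 (c * k) = Real.logb 2 (2 * n * c) + Real.logb 2 (k / (2 * n)) := by
    rw [← Real.logb_mul (by positivity) (by positivity)]
    congr 1
    field_simp
  have hself : n * Real.logb 2 (k / (2 * n)) ≤ k / 2 :=
    calc n * Real.logb 2 (k / (2 * n)) ≤ n * (k / (2 * n)) := by
          gcongr
          exact logb_two_le_self (by positivity)
      _ = k / 2 := by field_simp
  rw [hsplit, mul_add] at hlog
  linarith

lemma le_mul_sq_mul_logb_of_two_pow_le {b k n : ℕ} (hb : 2 ≤ b)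
    (h : 2 ^ k ≤ (4 * (k * (b * b)) + 1) ^ n) :
    (k : ℝ) ≤ 14 * n ^ 2 * Real.logb 2 b := by
  have hL : 1 ≤ Real.logb 2 b := by
    rw [Real.le_logb_iff_rpow_le one_lt_two (by positivity), Real.rpow_one]
    exact_mod_cast hb
  obtain rfl | hk := Nat.eq_zero_or_pos k
  · rw [Nat.cast_zero]
    positivity
  have hk' : 4 * (k * (b * b)) + 1 ≤ 8 * b ^ 2 * k := by
    nlinarith [Nat.mul_pos hk (by positivity : 0 < b * b)]
  have hkn := le_two_mul_mul_logb_of_two_pow_le (h.trans (Nat.pow_le_pow_left hk' n))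
  obtain rfl | hn := Nat.eq_zero_or_pos n
  · simpa using hkn
  have hn1 : (1 : ℝ) ≤ n := Nat.one_le_cast.2 hn
  have hlog : Real.logb 2 (2 * n * (8 * b ^ 2 : ℕ)) = 4 + Real.logb 2 n + 2 * Real.logb 2 b := by
    have hpow : 2 * n * (8 * b ^ 2 : ℕ) = (2 ^ 4 * n * b ^ 2 : ℝ) := by
      push_cast
      ring
    rw [hpow, Real.logb_mul (by positivity) (by positivity),
      Real.logb_mul (by positivity) (by positivity), Real.logb_pow, Real.logb_pow,
      Real.logb_self_eq_one one_lt_two]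
    norm_num
  have hlogn := logb_two_le_self (zero_lt_one.trans_le hn1)
  calc (k : ℝ) ≤ 2 * n * Real.logb 2 (2 * n * (8 * b ^ 2 : ℕ)) := hkn
    _ ≤ 2 * n * (7 * n * Real.logb 2 b) := by
        rw [hlog]
        gcongr
        nlinarith
    _ = 14 * n ^ 2 * Real.logb 2 b := by ring

/-- If `Z ⊆ ℝ^m × ℝ^n` is a semi-algebraic set of complexity at most `b ≥ 2`, then the range
space on `ℝ^m` whose ranges are the fibers `R_y = {x : (x,y) ∈ Z}`, `y ∈ ℝ^n`, has VC dimension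
at most `200·n²·log₂ b`. -/
theorem vcDim_semialgebraic_ranges (m n b : ℕ) (hb : 2 ≤ b)
    (Z : Set (Fin (m + n) → ℝ)) (hZ : IsSemiAlgebraicOfComplexity (m + n) b Z) :
    VCDimLE {r : Set (Fin m → ℝ) | ∃ y : Fin n → ℝ,
        r = {x : Fin m → ℝ | Fin.append x y ∈ Z}}
      (200 * (n : ℝ) ^ 2 * Real.logb 2 (b : ℝ)) := by
  obtain ⟨P, Ψ, hP, hZ⟩ := hZ.exists_signVector
  intro A hA
  simp only [hZ] at hA
  have hdeg : ∑ i, (P i).totalDegree ≤ b * b := by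
    simpa using Finset.sum_le_card_nsmul Finset.univ _ b fun i _ => hP i
  have hcard : 2 ^ A.card ≤ (4 * (A.card * (b * b)) + 1) ^ n :=
    hA.two_pow_card_le_of_signVector.trans (by gcongr)
  calc (A.card : ℝ) ≤ 14 * n ^ 2 * Real.logb 2 b := le_mul_sq_mul_logb_of_two_pow_le hb hcard
    _ ≤ 200 * n ^ 2 * Real.logb 2 b := by
        have := Real.logb_nonneg one_lt_two (Nat.one_le_cast.2 (by omega : 1 ≤ b))
        gcongr
        norm_num
end

section
/- Fix positive integers b, d, and k, set D = 2^{k/d}, and assume D ≥ 2^b. Fix a Boolean function G : {0,1}^b → {0,1} and any choice of the subspaces 𝕍_1,…,𝕍_k defining 𝕐_k. Then the set W_G = {(x,y) ∈ 𝕏 × 𝕐_k : Z_{x,G} ∩ S_y ≠ ∅} is a semi-algebraic subset of 𝕏 × 𝕐_k, and there is a constant C = C(b,d) such that W_G can be defined by a Boolean combination of at most e^{D^C} polynomials, each of degree at most D^{C·d}. -/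
open MvPolynomial

/-- The set `S ⊆ ℝ^M` is defined by a Boolean combination of (at most) `L` polynomials, each of
degree at most `t`: there are polynomials `Q_1,…,Q_L`, atoms `Q_i < 0` or `Q_i = 0` (selected by
`τ`), and a Boolean formula `φ` in these atoms, cutting out exactly `S`. -/
def DefinedByPolys {M : ℕ} (S : Set (Fin M → ℝ)) (L : ℕ) (t : ℝ) : Prop :=
  ∃ (Q : Fin L → MvPolynomial (Fin M) ℝ) (τ : Fin L → Bool) (φ : (Fin L → Prop) → Prop),
    (∀ i, ((Q i).totalDegree : ℝ) ≤ t) ∧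
    S = {x | φ fun i => if τ i then eval x (Q i) < 0 else eval x (Q i) = 0}

/-!
Membership in `W_G` asks for a point `v` at which finitely many polynomials, linear in `(x, y)`,
have prescribed signs, so the theorem is an effective form of the Tarski–Seidenberg theorem; the
`d` coordinates of `v` are eliminated one at a time.

To eliminate one variable from a finite family of polynomials, add to the family the derivatives of
the pairwise products. By Rolle's theorem every sign pattern of the family on the line is then
attained at `±∞` or at a root of a member of the enlarged family. The signs at the roots of `P` are
recovered from the Tarski queries of `P` with products `G` of few squares and members of the family,
because sign vectors on the roots are separated by few coordinates. A Tarski query is the signature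
of the Hermite matrix of `P` and `G`. By Descartes' rule of signs, which is exact for real-rooted
polynomials, that signature is determined by the signs of the coefficients of the characteristic
polynomial. These coefficients are polynomials in the remaining variables, and passing to them
raises the parameter `T` bounding the complexity of the family to the power nine.
-/

section Descartes

open scoped Polynomial

variable {R : Type*} [CommRing R]

theorem coeff_comp_neg_X (P : R[X]) (i : ℕ) :
    (P.comp (-Polynomial.X)).coeff i = (-1) ^ i * P.coeff i := by
  rw [← neg_one_mul, ← Polynomial.C_1, ← Polynomial.C_neg, Polynomial.comp_C_mul_X_coeff, mul_comm]

theorem comp_neg_X_eq_zero_iff {P : R[X]} : P.comp (-Polynomial.X) = 0 ↔ P = 0 := by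
  refine ⟨fun h ↦ ?_, fun h ↦ by rw [h, Polynomial.zero_comp]⟩
  rw [← Polynomial.comp_neg_X_comp_neg_X P, h, Polynomial.zero_comp]

theorem natDegree_comp_neg_X [IsDomain R] (P : R[X]) :
    (P.comp (-Polynomial.X)).natDegree = P.natDegree := by
  rw [Polynomial.natDegree_comp, Polynomial.natDegree_neg, Polynomial.natDegree_X, mul_one]

theorem leadingCoeff_comp_neg_X [IsDomain R] (P : R[X]) :
    (P.comp (-Polynomial.X)).leadingCoeff = (-1) ^ P.natDegree * P.leadingCoeff := by
  rw [Polynomial.leadingCoeff, natDegree_comp_neg_X, coeff_comp_neg_X, Polynomial.leadingCoeff]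

theorem eraseLead_comp_neg_X [IsDomain R] (P : R[X]) :
    (P.comp (-Polynomial.X)).eraseLead = P.eraseLead.comp (-Polynomial.X) := by
  ext i
  simp only [Polynomial.eraseLead_coeff, natDegree_comp_neg_X, coeff_comp_neg_X, mul_ite, mul_zero]

variable [LinearOrder R]

theorem countP_pos_add_countP_neg_add_count_zero (s : Multiset R) :
    s.countP (0 < ·) + s.countP (· < 0) + s.count 0 = s.card := by
  induction s using Multiset.induction with
  | empty => simp
  | cons a s ih =>
    rw [Multiset.countP_cons, Multiset.countP_cons, Multiset.count_cons, Multiset.card_cons, ← ih]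
    obtain h | h | h := lt_trichotomy a 0
    · simp only [h, h.not_gt, h.ne', if_true, if_false]; omega
    · simp only [h, lt_irrefl, if_true, if_false]; omega
    · simp only [h, h.not_gt, h.ne, if_true, if_false]; omega

theorem signVariations_congr {P Q : R[X]} (hdeg : P.degree = Q.degree)
    (hsign : ∀ i, SignType.sign (P.coeff i) = SignType.sign (Q.coeff i)) :
    P.signVariations = Q.signVariations := by
  have hlist : P.coeffList.map SignType.sign = Q.coeffList.map SignType.sign := by
    simp [Polynomial.coeffList, hdeg, Function.comp_def, hsign]
  rw [Polynomial.signVariations, Polynomial.signVariations, hlist]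

theorem sum_map_sign (s : Multiset R) :
    (s.map fun a ↦ (SignType.sign a : ℤ)).sum = s.countP (0 < ·) - s.countP (· < 0) := by
  induction s using Multiset.induction with
  | empty => simp
  | cons a s ih =>
    rw [Multiset.map_cons, Multiset.sum_cons, Multiset.countP_cons, Multiset.countP_cons, ih]
    obtain h | h | h := lt_trichotomy a 0
    · simp only [h, h.not_gt, sign_neg, SignType.coe_neg_one, if_true, if_false]; omega
    · simp [h]
    · simp only [h, h.not_gt, sign_pos, SignType.coe_one, if_true, if_false]; omega

variable [IsStrictOrderedRing R]

/-- When the two leading degrees are consecutive, `X ↦ -X` flips the relative sign of the leading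
coefficients, so only one of the two polynomials gains a variation. -/
theorem signVariations_add_comp_neg_X_le_eraseLead {P : R[X]} (hP : P.eraseLead ≠ 0) :
    P.signVariations + (P.comp (-Polynomial.X)).signVariations + P.eraseLead.natDegree ≤
      P.eraseLead.signVariations + (P.eraseLead.comp (-Polynomial.X)).signVariations +
        P.natDegree := by
  have hP0 : P ≠ 0 := by rintro rfl; simp at hP
  have hlt : P.eraseLead.natDegree < P.natDegree :=
    Polynomial.eraseLead_natDegree_lt_or_eraseLead_eq_zero P |>.resolve_right hP
  rw [← eraseLead_comp_neg_X]
  have hpos := Polynomial.signVariations_le_eraseLead_succ (P := P)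
  have hneg := Polynomial.signVariations_le_eraseLead_succ (P := P.comp (-Polynomial.X))
  obtain hgap | hgap : P.eraseLead.natDegree + 2 ≤ P.natDegree ∨
      P.natDegree = P.eraseLead.natDegree + 1 := by omega
  · omega
  have hone : ∀ u a c : SignType, u ≠ 0 → a ≠ 0 →
      (if a = -c then 1 else 0) + (if u * -1 * a = -(u * c) then 1 else 0) ≤ 1 := by decide
  have := hone (SignType.sign ((-1 : R) ^ P.eraseLead.natDegree)) (SignType.sign P.leadingCoeff)
    (SignType.sign P.eraseLead.leadingCoeff) (by simp) (by simpa using hP0)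
  rw [Polynomial.signVariations_eq_eraseLead_add_ite hP0,
    Polynomial.signVariations_eq_eraseLead_add_ite (mt comp_neg_X_eq_zero_iff.mp hP0),
    eraseLead_comp_neg_X, leadingCoeff_comp_neg_X, leadingCoeff_comp_neg_X, hgap]
  simp only [sign_mul, pow_succ, Left.sign_neg, sign_one] at this ⊢
  omega

theorem signVariations_add_comp_neg_X_add_natTrailingDegree_le {P : R[X]} (hP : P ≠ 0) :
    P.signVariations + (P.comp (-Polynomial.X)).signVariations + P.natTrailingDegree ≤
      P.natDegree := by
  induction hn : P.natDegree using Nat.strong_induction_on generalizing P with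
  | _ n ih =>
    subst hn
    by_cases hE : P.eraseLead = 0
    · rw [Polynomial.signVariations_eq_eraseLead_add_ite hP,
        Polynomial.signVariations_eq_eraseLead_add_ite (mt comp_neg_X_eq_zero_iff.mp hP),
        eraseLead_comp_neg_X, hE]
      simpa [hP, comp_neg_X_eq_zero_iff] using P.natTrailingDegree_le_natDegree
    have hlt : P.eraseLead.natDegree < P.natDegree :=
      Polynomial.eraseLead_natDegree_lt_or_eraseLead_eq_zero P |>.resolve_right hE
    have htrail : P.natTrailingDegree ≤ P.eraseLead.natTrailingDegree := by
      refine Polynomial.le_natTrailingDegree hE fun i hi ↦ ?_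
      rw [Polynomial.eraseLead_coeff, Polynomial.coeff_eq_zero_of_lt_natTrailingDegree hi, ite_self]
    have := ih _ hlt hE rfl
    have := signVariations_add_comp_neg_X_le_eraseLead hE
    omega

variable {P Q : R[X]}

/-- Both bounds of Descartes' rule (for `P` and for `P(-X)`) must be attained, since together with
the multiplicity of the root `0` they add up to at most the degree. -/
theorem countP_roots_eq_signVariations (hP : P ≠ 0) (hsplit : P.Splits) :
    P.roots.countP (0 < ·) = P.signVariations ∧
      P.roots.countP (· < 0) = (P.comp (-Polynomial.X)).signVariations := by
  have hpos := Polynomial.roots_countP_pos_le_signVariations (P := P)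
  have hneg := Polynomial.roots_countP_pos_le_signVariations (P := P.comp (-Polynomial.X))
  rw [Polynomial.roots_comp_neg_X, Multiset.countP_map, ← Multiset.countP_eq_card_filter] at hneg
  simp only [Left.neg_pos_iff] at hneg
  have hsum := signVariations_add_comp_neg_X_add_natTrailingDegree_le hP
  have hcard := countP_pos_add_countP_neg_add_count_zero P.roots
  rw [Polynomial.count_roots, Polynomial.rootMultiplicity_eq_natTrailingDegree',
    ← hsplit.natDegree_eq_card_roots] at hcard
  omega

theorem sum_sign_roots_congr (hP : P ≠ 0) (hdeg : P.degree = Q.degree)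
    (hPs : P.Splits) (hQs : Q.Splits)
    (hsign : ∀ i, SignType.sign (P.coeff i) = SignType.sign (Q.coeff i)) :
    (P.roots.map fun a ↦ (SignType.sign a : ℤ)).sum =
      (Q.roots.map fun a ↦ (SignType.sign a : ℤ)).sum := by
  have hQ : Q ≠ 0 := by rwa [← Polynomial.degree_ne_bot, ← hdeg, Polynomial.degree_ne_bot]
  have hdeg_neg : (P.comp (-Polynomial.X)).degree = (Q.comp (-Polynomial.X)).degree := by
    rw [Polynomial.degree_eq_natDegree (mt comp_neg_X_eq_zero_iff.mp hP),
      Polynomial.degree_eq_natDegree (mt comp_neg_X_eq_zero_iff.mp hQ), natDegree_comp_neg_X,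
      natDegree_comp_neg_X, Polynomial.natDegree_eq_of_degree_eq hdeg]
  rw [sum_map_sign, sum_map_sign,
    (countP_roots_eq_signVariations hP hPs).1, (countP_roots_eq_signVariations hP hPs).2,
    (countP_roots_eq_signVariations hQ hQs).1, (countP_roots_eq_signVariations hQ hQs).2,
    signVariations_congr hdeg hsign, signVariations_congr hdeg_neg fun i ↦ ?_]
  rw [coeff_comp_neg_X, coeff_comp_neg_X, sign_mul, sign_mul, hsign]

end Descartes

section Signature

variable {𝕜 M M' ι : Type*} [Field 𝕜] [LinearOrder 𝕜]
  [AddCommGroup M] [Module 𝕜 M] [FiniteDimensional 𝕜 M]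
  [AddCommGroup M'] [Module 𝕜 M'] [FiniteDimensional 𝕜 M']

/-- The signature `sigPos Q - sigNeg Q` of a quadratic form, as an integer. -/
noncomputable def signature (Q : QuadraticForm 𝕜 M) : ℤ :=
  sigPos Q - sigNeg Q

theorem sigPos_le_of_map {Q : QuadraticForm 𝕜 M} {Q' : QuadraticForm 𝕜 M'} (f : M →ₗ[𝕜] M')
    (h : ∀ z, Q' (f z) = Q z) : sigPos Q ≤ sigPos Q' := by
  obtain ⟨V, hV, hpos⟩ := exists_finrank_eq_sigPos_and_posDef Q
  have hinj : Function.Injective (f.domRestrict V) := by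
    rw [← LinearMap.ker_eq_bot, LinearMap.ker_eq_bot']
    intro v hv
    by_contra hne
    have hlt : 0 < Q v := hpos v hne
    rw [← h, ← LinearMap.domRestrict_apply, hv, QuadraticMap.map_zero] at hlt
    exact hlt.false
  have hdim : Module.finrank 𝕜 (V.map f) = sigPos Q := by
    rw [← hV, ← LinearMap.range_domRestrict, LinearMap.finrank_range_of_inj hinj]
  rw [← hdim]
  apply le_sigPos_of_posDef
  rintro ⟨_, v, hv, rfl⟩ hne
  have hv0 : (⟨v, hv⟩ : V) ≠ 0 := by
    rintro h0
    obtain rfl : v = 0 := congrArg Subtype.val h0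
    simp at hne
  have hlt : 0 < Q v := hpos _ hv0
  rwa [← h] at hlt

variable [IsStrictOrderedRing 𝕜] [Fintype ι]

theorem signature_weightedSumSquares (w : ι → 𝕜) :
    signature (QuadraticMap.weightedSumSquares 𝕜 w) = ∑ i, (SignType.sign (w i) : ℤ) := by
  have hsum : ∑ i, (SignType.sign (w i) : ℤ) =
      ((Finset.univ.val.map w).map fun a ↦ (SignType.sign a : ℤ)).sum := by
    rw [Multiset.map_map]; rfl
  rw [hsum, sum_map_sign, signature, QuadraticForm.sigPos_weightedSumSquares,
    QuadraticForm.sigNeg_weightedSumSquares, Set.ncard_eq_toFinset_card',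
    Set.ncard_eq_toFinset_card', Multiset.countP_map, Multiset.countP_map]
  simp [Finset.card, Finset.filter]

theorem signature_eq_sum_sign {Q : QuadraticForm 𝕜 M} (w : ι → 𝕜) {f : M →ₗ[𝕜] (ι → 𝕜)}
    (hf : Function.Surjective f) (h : ∀ z, Q z = ∑ i, w i * f z i ^ 2) :
    signature Q = ∑ i, (SignType.sign (w i) : ℤ) := by
  obtain ⟨g, hg⟩ := f.exists_rightInverse_of_surjective (LinearMap.range_eq_top.mpr hf)
  have hQf (z : M) : QuadraticMap.weightedSumSquares 𝕜 w (f z) = Q z := by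
    simp [h, QuadraticMap.weightedSumSquares_apply, sq]
  have hQg (y : ι → 𝕜) : Q (g y) = QuadraticMap.weightedSumSquares 𝕜 w y := by
    rw [← hQf, ← LinearMap.comp_apply, hg, LinearMap.id_apply]
  have hpos : sigPos Q = sigPos (QuadraticMap.weightedSumSquares 𝕜 w) :=
    le_antisymm (sigPos_le_of_map f hQf) (sigPos_le_of_map g hQg)
  have hneg : sigNeg Q = sigNeg (QuadraticMap.weightedSumSquares 𝕜 w) :=
    le_antisymm (sigPos_le_of_map f fun z ↦ by simp [hQf])
      (sigPos_le_of_map g fun y ↦ by simp [hQg])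
  rw [← signature_weightedSumSquares, signature, signature, hpos, hneg]

end Signature

section HermitianSignature

open Matrix

variable {n : Type*} [Fintype n] [DecidableEq n]

theorem toQuadraticForm'_apply_eq_sum {R : Type*} [CommRing R] (A : Matrix n n R) (z : n → R) :
    A.toQuadraticForm' z = ∑ i, ∑ j, A i j * (z i * z j) := by
  simp only [Matrix.toQuadraticForm', LinearMap.BilinMap.toQuadraticMap_apply,
    Matrix.toLinearMap₂'_apply, smul_eq_mul]
  refine Finset.sum_congr rfl fun i _ ↦ Finset.sum_congr rfl fun j _ ↦ ?_
  ring

variable {H K : Matrix n n ℝ}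

theorem signature_eq_sum_sign_eigenvalues (hH : H.IsHermitian) :
    signature H.toQuadraticForm' = ∑ i, (SignType.sign (hH.eigenvalues i) : ℤ) := by
  set U : Matrix n n ℝ := (hH.eigenvectorUnitary : Matrix n n ℝ)
  have hUU : Uᵀ * U = 1 := by
    simpa [star_eq_conjTranspose] using Unitary.coe_star_mul_self hH.eigenvectorUnitary
  have hspec : H = U * diagonal hH.eigenvalues * Uᵀ := by
    simpa [Unitary.conjStarAlgAut_apply, star_eq_conjTranspose, Function.comp_def]
      using hH.spectral_theorem
  refine signature_eq_sum_sign hH.eigenvalues (f := Uᵀ.mulVecLin) (fun y ↦ ⟨U *ᵥ y, ?_⟩) fun z ↦ ?_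
  · rw [mulVecLin_apply, mulVec_mulVec, hUU, one_mulVec]
  calc H.toQuadraticForm' z = z ⬝ᵥ (U * diagonal hH.eigenvalues * Uᵀ) *ᵥ z := by
        rw [← hspec]; simp [toQuadraticForm', toLinearMap₂'_apply']
    _ = (Uᵀ *ᵥ z) ⬝ᵥ diagonal hH.eigenvalues *ᵥ (Uᵀ *ᵥ z) := by
        rw [← mulVec_mulVec, ← mulVec_mulVec, dotProduct_mulVec, ← mulVec_transpose]
    _ = ∑ i, hH.eigenvalues i * (Uᵀ.mulVecLin z) i ^ 2 := by
        simp only [dotProduct, mulVec_diagonal, mulVecLin_apply]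
        exact Finset.sum_congr rfl fun i _ ↦ by ring

theorem signature_eq_sum_sign_roots_charpoly (hH : H.IsHermitian) :
    signature H.toQuadraticForm' =
      (H.charpoly.roots.map fun a ↦ (SignType.sign a : ℤ)).sum := by
  rw [signature_eq_sum_sign_eigenvalues hH, hH.roots_charpoly_eq_eigenvalues, Multiset.map_map]
  rfl

theorem signature_congr_of_sign_charpoly (hH : H.IsHermitian) (hK : K.IsHermitian)
    (h : ∀ i ≤ Fintype.card n,
      SignType.sign (H.charpoly.coeff i) = SignType.sign (K.charpoly.coeff i)) :
    signature H.toQuadraticForm' = signature K.toQuadraticForm' := by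
  rw [signature_eq_sum_sign_roots_charpoly hH, signature_eq_sum_sign_roots_charpoly hK]
  refine sum_sign_roots_congr H.charpoly_monic.ne_zero ?_ hH.splits_charpoly hK.splits_charpoly
    fun i ↦ ?_
  · rw [charpoly_degree_eq_dim, charpoly_degree_eq_dim]
  · obtain hi | hi := le_or_gt i (Fintype.card n)
    · exact h i hi
    · rw [Polynomial.coeff_eq_zero_of_natDegree_lt (by rwa [charpoly_natDegree_eq_dim]),
        Polynomial.coeff_eq_zero_of_natDegree_lt (by rwa [charpoly_natDegree_eq_dim])]

end HermitianSignature

section ConjugateSums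

open scoped ComplexConjugate

theorem sum_eq_sum_real_add_sum_upper {A : Type*} [AddCommMonoid A] {S : Finset ℂ}
    (hS : ∀ a ∈ S, conj a ∈ S) (F : ℂ → A) :
    ∑ a ∈ S, F a = ∑ a ∈ S with a.im = 0, F a + ∑ a ∈ S with 0 < a.im, (F a + F (conj a)) := by
  have hlower : ∑ a ∈ S with a.im < 0, F a = ∑ a ∈ S with 0 < a.im, F (conj a) := by
    refine Finset.sum_nbij' conj conj ?_ ?_ ?_ ?_ ?_ <;> simp +contextual [hS]
  have hsplit : {a ∈ S | ¬ a.im = 0} = {a ∈ S | 0 < a.im} ∪ {a ∈ S | a.im < 0} := by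
    ext a
    simp only [Finset.mem_filter, Finset.mem_union, ← and_or_left, or_comm, ← ne_eq,
      ne_iff_lt_or_gt]
  have hdisj : Disjoint {a ∈ S | 0 < a.im} {a ∈ S | a.im < 0} :=
    Finset.disjoint_filter.mpr fun a _ h ↦ h.not_gt
  rw [← Finset.sum_filter_add_sum_filter_not S (fun a ↦ a.im = 0), hsplit,
    Finset.sum_union hdisj, hlower, Finset.sum_add_distrib]

/-- The square root of the phase of `γ` that makes `γ = ‖γ‖ * halfPhase γ ^ 2`. -/
noncomputable def halfPhase (γ : ℂ) : ℂ :=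
  Complex.exp (γ.arg / 2 * Complex.I)

theorem halfPhase_ne_zero (γ : ℂ) : halfPhase γ ≠ 0 :=
  Complex.exp_ne_zero _

theorem norm_mul_halfPhase_sq (γ : ℂ) : ‖γ‖ * halfPhase γ ^ 2 = γ := by
  rw [halfPhase, ← Complex.exp_nat_mul]
  convert γ.norm_mul_exp_arg_mul_I using 3
  push_cast
  ring

theorem re_mul_sq_eq_norm_mul (γ e : ℂ) :
    (γ * e ^ 2).re = ‖γ‖ * (halfPhase γ * e).re ^ 2 - ‖γ‖ * (halfPhase γ * e).im ^ 2 := by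
  have hsq : γ * e ^ 2 = ‖γ‖ * (halfPhase γ * e) ^ 2 := by
    rw [mul_pow, ← mul_assoc, norm_mul_halfPhase_sq]
  rw [hsq, Complex.re_ofReal_mul, sq, Complex.mul_re]
  ring

/-- The real weight at `a` of the diagonalisation of `∑ a, γ a * e a ^ 2`, where `γ` and `e` commute
with conjugation. -/
noncomputable def conjWeight (γ : ℂ → ℂ) (a : ℂ) : ℝ :=
  if a.im = 0 then (γ a).re else if 0 < a.im then 2 * ‖γ a‖ else -(2 * ‖γ (conj a)‖)

/-- The real coordinate at `a` of a function `e` commuting with conjugation: a pair of conjugate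
points stores the real and the imaginary part of `e`, rotated so that the cross term of
`γ a * e a ^ 2` disappears. -/
noncomputable def conjCoord (γ : ℂ → ℂ) : (ℂ → ℂ) →ₗ[ℝ] (ℂ → ℝ) where
  toFun e a := if a.im = 0 then (e a).re else
    if 0 < a.im then (halfPhase (γ a) * e a).re else (halfPhase (γ (conj a)) * e (conj a)).im
  map_add' e e' := by
    ext a
    simp only [Pi.add_apply, mul_add, Complex.add_re, Complex.add_im]
    split_ifs <;> rfl
  map_smul' c e := by
    ext a
    simp only [Pi.smul_apply, mul_smul_comm, Complex.smul_re, Complex.smul_im, RingHom.id_apply]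
    split_ifs <;> rfl

variable {γ e : ℂ → ℂ}

theorem sum_conjWeight_mul_conjCoord_sq {S : Finset ℂ} (hS : ∀ a ∈ S, conj a ∈ S)
    (hγ : ∀ a, γ (conj a) = conj (γ a)) (he : ∀ a, e (conj a) = conj (e a)) :
    ∑ a ∈ S, conjWeight γ a * conjCoord γ e a ^ 2 = (∑ a ∈ S, γ a * e a ^ 2).re := by
  rw [Complex.re_sum, sum_eq_sum_real_add_sum_upper hS, sum_eq_sum_real_add_sum_upper hS]
  congr 1
  · refine Finset.sum_congr rfl fun a ha ↦ ?_
    have him : a.im = 0 := (Finset.mem_filter.mp ha).2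
    have hγa : γ a = (γ a).re := by
      rw [eq_comm, ← Complex.conj_eq_iff_re, ← hγ, Complex.conj_eq_iff_im.mpr him]
    have hea : e a = (e a).re := by
      rw [eq_comm, ← Complex.conj_eq_iff_re, ← he, Complex.conj_eq_iff_im.mpr him]
    rw [hγa, hea, ← Complex.ofReal_pow, ← Complex.ofReal_mul, Complex.ofReal_re]
    simp [conjWeight, conjCoord, him]
  · refine Finset.sum_congr rfl fun a ha ↦ ?_
    have him : 0 < a.im := (Finset.mem_filter.mp ha).2
    have hconj : (γ (conj a) * e (conj a) ^ 2).re = (γ a * e a ^ 2).re := by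
      rw [hγ, he, ← map_pow, ← map_mul, Complex.conj_re]
    rw [hconj, re_mul_sq_eq_norm_mul]
    simp [conjWeight, conjCoord, him, him.ne', him.not_gt]
    ring

theorem sum_sign_conjWeight {S : Finset ℂ} (hS : ∀ a ∈ S, conj a ∈ S) :
    ∑ a ∈ S, (SignType.sign (conjWeight γ a) : ℤ) =
      ∑ a ∈ S with a.im = 0, (SignType.sign (γ a).re : ℤ) := by
  rw [sum_eq_sum_real_add_sum_upper hS, Finset.sum_eq_zero (s := {a ∈ S | 0 < a.im}), add_zero]
  · refine Finset.sum_congr rfl fun a ha ↦ ?_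
    rw [conjWeight, if_pos (Finset.mem_filter.mp ha).2]
  · intro a ha
    have him : 0 < a.im := (Finset.mem_filter.mp ha).2
    simp [conjWeight, him, him.ne', him.not_gt, Left.sign_neg]

theorem exists_conjCoord_eq (γ : ℂ → ℂ) (y : ℂ → ℝ) :
    ∃ e : ℂ → ℂ, (∀ a, e (conj a) = conj (e a)) ∧ conjCoord γ e = y := by
  let upper (a : ℂ) : ℂ := (y a + y (conj a) * Complex.I) / halfPhase (γ a)
  have hupper (a : ℂ) : halfPhase (γ a) * upper a = y a + y (conj a) * Complex.I :=
    mul_div_cancel₀ _ (halfPhase_ne_zero _)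
  refine ⟨fun a ↦ if a.im = 0 then y a else if 0 < a.im then upper a else conj (upper (conj a)),
    fun a ↦ ?_, funext fun a ↦ ?_⟩
  · obtain h | h | h := lt_trichotomy a.im 0
    · simp [h, h.ne, h.not_gt]
    · simp [h, Complex.conj_eq_iff_im.mpr h]
    · simp [h, h.ne', h.not_gt]
  · obtain h | h | h := lt_trichotomy a.im 0
    · simp [conjCoord, h.ne, h.not_gt, h, hupper, -Complex.mul_im, Complex.im_ofReal_mul]
    · simp [conjCoord, h]
    · simp [conjCoord, h, h.ne', hupper, -Complex.mul_re, Complex.re_ofReal_mul]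

variable {M : Type*} [AddCommGroup M] [Module ℝ M] [FiniteDimensional ℝ M]

theorem signature_eq_sum_sign_of_conj {Q : QuadraticForm ℝ M} {S : Finset ℂ}
    (hS : ∀ a ∈ S, conj a ∈ S) (hγ : ∀ a, γ (conj a) = conj (γ a))
    (E : M →ₗ[ℝ] (ℂ → ℂ)) (hE : ∀ z a, E z (conj a) = conj (E z a))
    (hsurj : ∀ e : ℂ → ℂ, (∀ a, e (conj a) = conj (e a)) → ∃ z, ∀ a ∈ S, E z a = e a)
    (hQ : ∀ z, (Q z : ℂ) = ∑ a ∈ S, γ a * E z a ^ 2) :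
    signature Q = ∑ a ∈ S with a.im = 0, (SignType.sign (γ a).re : ℤ) := by
  rw [← sum_sign_conjWeight hS, ← Finset.sum_coe_sort S]
  refine signature_eq_sum_sign (fun a : S ↦ conjWeight γ a)
    (f := LinearMap.funLeft ℝ ℝ ((↑) : S → ℂ) ∘ₗ conjCoord γ ∘ₗ E) (fun y ↦ ?_) fun z ↦ ?_
  · obtain ⟨e, he, hey⟩ := exists_conjCoord_eq γ (Function.extend Subtype.val y 0)
    obtain ⟨z, hz⟩ := hsurj e he
    refine ⟨z, funext fun a ↦ ?_⟩
    rw [← Subtype.val_injective.extend_apply y 0 a, ← hey]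
    simp only [LinearMap.comp_apply, LinearMap.funLeft_apply, conjCoord, LinearMap.coe_mk,
      AddHom.coe_mk, hz a a.2, hz _ (hS a a.2)]
  · rw [← Complex.ofReal_re (Q z), hQ, ← sum_conjWeight_mul_conjCoord_sq hS hγ (hE z),
      ← Finset.sum_coe_sort S]
    rfl

end ConjugateSums

section Hermite

open scoped ComplexConjugate Polynomial

theorem exists_real_coeffs_interpolating {S : Finset ℂ} (hS : ∀ a ∈ S, conj a ∈ S) {m : ℕ}
    (hm : S.card ≤ m) {e : ℂ → ℂ} (he : ∀ a, e (conj a) = conj (e a)) :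
    ∃ z : Fin m → ℝ, ∀ a ∈ S, ∑ i, (z i : ℂ) * a ^ (i : ℕ) = e a := by
  let L : ℂ[X] := Lagrange.interpolate S id e
  have hdeg : L.degree < m :=
    (Lagrange.degree_interpolate_lt e (Set.injOn_id _)).trans_le (by exact_mod_cast hm)
  have hL (a : ℂ) (ha : a ∈ S) : ∑ i : Fin m, L.coeff i * a ^ (i : ℕ) = e a := by
    rw [← Lagrange.eval_interpolate_at_node (v := id) e (Set.injOn_id _) ha,
      Polynomial.eval_eq_sum_degreeLTEquiv (Polynomial.mem_degreeLT.mpr hdeg)]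
    rfl
  have hLconj (a : ℂ) (ha : a ∈ S) : ∑ i : Fin m, conj (L.coeff i) * a ^ (i : ℕ) = e a := by
    have := congrArg conj (hL _ (hS a ha))
    simpa only [map_sum, map_mul, map_pow, Complex.conj_conj, he] using this
  refine ⟨fun i ↦ (L.coeff i).re, fun a ha ↦ ?_⟩
  have hre (w : ℂ) : (w.re : ℂ) = (w + conj w) / 2 := by
    rw [Complex.add_conj, Complex.ofReal_mul, Complex.ofReal_ofNat,
      mul_div_cancel_left₀ _ two_ne_zero]
  simp only [hre, add_div, add_mul, Finset.sum_add_distrib, div_mul_eq_mul_div,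
    ← Finset.sum_div, hL a ha, hLconj a ha, add_halves]

theorem count_aroots_conj (P : ℝ[X]) (a : ℂ) :
    (P.aroots ℂ).count (conj a) = (P.aroots ℂ).count a := by
  rw [Polynomial.count_roots, Polynomial.count_roots,
    Polynomial.eq_rootMultiplicity_map (starRingEnd ℂ).injective a, Polynomial.map_map]
  congr 2
  ext x
  simp

/-- Evaluation of the real polynomial with coefficients `z` at the points `c * a`. -/
noncomputable def evalScaled (m : ℕ) (c : ℝ) : (Fin m → ℝ) →ₗ[ℝ] (ℂ → ℂ) where
  toFun z a := ∑ i, (z i : ℂ) * (c * a) ^ (i : ℕ)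
  map_add' z z' := by
    ext a
    simp only [Pi.add_apply, Complex.ofReal_add, add_mul, Finset.sum_add_distrib]
  map_smul' r z := by
    ext a
    simp only [Pi.smul_apply, smul_eq_mul, Complex.ofReal_mul, mul_assoc, Finset.mul_sum,
      Complex.real_smul, RingHom.id_apply]

variable {P G : ℝ[X]} {m : ℕ} {c : ℝ} {H : Matrix (Fin m) (Fin m) ℝ}

theorem toQuadraticForm'_eq_sum_evalScaled_sq
    (hH : ∀ i j, (H i j : ℂ) =
      ((P.aroots ℂ).map fun a : ℂ ↦ Polynomial.aeval a G * (c * a) ^ (i + j : ℕ)).sum)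
    (z : Fin m → ℝ) :
    (H.toQuadraticForm' z : ℂ) = ∑ a ∈ (P.aroots ℂ).toFinset,
      (P.aroots ℂ).count a * Polynomial.aeval a G * evalScaled m c z a ^ 2 := by
  have hsq (a : ℂ) : evalScaled m c z a ^ 2 =
      ∑ i : Fin m, ∑ j : Fin m, z i * z j * (c * a) ^ (i + j : ℕ) := by
    rw [sq]
    refine (Finset.sum_mul_sum _ _ _ _).trans ?_
    simp only [pow_add, mul_mul_mul_comm]
  rw [toQuadraticForm'_apply_eq_sum, Complex.ofReal_sum]
  simp only [hsq, Finset.mul_sum]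
  rw [Finset.sum_comm]
  refine Finset.sum_congr rfl fun i _ ↦ ?_
  rw [Finset.sum_comm, Complex.ofReal_sum]
  refine Finset.sum_congr rfl fun j _ ↦ ?_
  rw [Complex.ofReal_mul, hH, Finset.sum_multiset_map_count, Finset.sum_mul]
  refine Finset.sum_congr rfl fun a _ ↦ ?_
  rw [nsmul_eq_mul, Complex.ofReal_mul]
  ring

theorem ofReal_mem_aroots (r : ℝ) : (r : ℂ) ∈ P.aroots ℂ ↔ r ∈ P.roots := by
  rw [Polynomial.mem_aroots, Polynomial.mem_roots', Polynomial.IsRoot, ← Complex.coe_algebraMap,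
    Polynomial.aeval_algebraMap_apply_eq_algebraMap_eval, Complex.coe_algebraMap,
    Complex.ofReal_eq_zero]

theorem sum_aroots_filter_im_eq_zero {A : Type*} [AddCommMonoid A] (P : ℝ[X]) (F : ℂ → A) :
    ∑ a ∈ (P.aroots ℂ).toFinset with a.im = 0, F a = ∑ r ∈ P.roots.toFinset, F r := by
  have hre (a : ℂ) (ha : a ∈ {a ∈ (P.aroots ℂ).toFinset | a.im = 0}) : (a.re : ℂ) = a :=
    Complex.ext rfl (Finset.mem_filter.mp ha).2.symm
  refine Finset.sum_nbij' Complex.re (↑) (fun a ha ↦ ?_) (fun r hr ↦ ?_) hre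
    (fun r _ ↦ Complex.ofReal_re r) fun a ha ↦ by rw [hre a ha]
  · rw [Multiset.mem_toFinset, ← ofReal_mem_aroots, hre a ha]
    exact Multiset.mem_toFinset.mp (Finset.mem_filter.mp ha).1
  · exact Finset.mem_filter.mpr ⟨Multiset.mem_toFinset.mpr <|
      (ofReal_mem_aroots r).mpr (Multiset.mem_toFinset.mp hr), Complex.ofReal_im r⟩

/-- The Tarski query of `P` and `G`: the number of roots of `P` at which `G` is positive, minus the
number of those at which it is negative. -/
noncomputable def tarskiQuery (P G : ℝ[X]) : ℤ :=
  ∑ r ∈ P.roots.toFinset, (SignType.sign (G.eval r) : ℤ)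

theorem tarskiQuery_C_mul (hc : 0 < c) :
    tarskiQuery P (Polynomial.C c * G) = tarskiQuery P G := by
  simp only [tarskiQuery, Polynomial.eval_C_mul, sign_mul, sign_pos hc, one_mul]

/-- Hermite's theorem. The factor `c` rescales the roots: for `c` the leading coefficient of `P`,
the power sums of the `c * a` are polynomials in the coefficients of `P`. -/
theorem signature_hermite (hm : P.natDegree ≤ m) (hc : c ≠ 0)
    (hH : ∀ i j, (H i j : ℂ) =
      ((P.aroots ℂ).map fun a : ℂ ↦ Polynomial.aeval a G * (c * a) ^ (i + j : ℕ)).sum) :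
    signature H.toQuadraticForm' = tarskiQuery P G := by
  have hS (a : ℂ) (ha : a ∈ (P.aroots ℂ).toFinset) : conj a ∈ (P.aroots ℂ).toFinset := by
    rwa [Multiset.mem_toFinset, ← Multiset.count_pos, count_aroots_conj, Multiset.count_pos,
      ← Multiset.mem_toFinset]
  have hcard : (P.aroots ℂ).toFinset.card ≤ m :=
    (Multiset.toFinset_card_le _).trans <| (Polynomial.card_roots' _).trans <|
      Polynomial.natDegree_map_le.trans hm
  rw [signature_eq_sum_sign_of_conj hS (γ := fun a ↦ (P.aroots ℂ).count a * Polynomial.aeval a G)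
    (fun a ↦ by rw [count_aroots_conj, Polynomial.aeval_conj, map_mul, map_natCast])
    (evalScaled m c) (fun z a ↦ by simp [evalScaled]) (fun e he ↦ ?_)
    (toQuadraticForm'_eq_sum_evalScaled_sq hH), sum_aroots_filter_im_eq_zero, tarskiQuery]
  · refine Finset.sum_congr rfl fun r hr ↦ ?_
    have hpos : 0 < (P.aroots ℂ).count (r : ℂ) :=
      Multiset.count_pos.mpr <| (ofReal_mem_aroots r).mpr (Multiset.mem_toFinset.mp hr)
    rw [← Complex.coe_algebraMap, Polynomial.aeval_algebraMap_apply_eq_algebraMap_eval,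
      Complex.coe_algebraMap, ← Complex.ofReal_natCast, ← Complex.ofReal_mul, Complex.ofReal_re,
      sign_mul, sign_pos (Nat.cast_pos.mpr hpos), one_mul]
  · obtain ⟨z, hz⟩ := exists_real_coeffs_interpolating hS hcard he
    refine ⟨fun i ↦ z i / c ^ (i : ℕ), fun a ha ↦
      (Finset.sum_congr rfl fun i _ ↦ ?_).trans (hz a ha)⟩
    rw [Complex.ofReal_div, Complex.ofReal_pow, mul_pow, ← mul_assoc,
      div_mul_cancel₀ _ (pow_ne_zero _ (Complex.ofReal_ne_zero.mpr hc))]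

end Hermite

section CoeffDegree

open scoped Polynomial

variable {σ R : Type*} [CommRing R]

theorem mul_mem_restrictTotalDegree {a b : ℕ} {p q : MvPolynomial σ R}
    (hp : p ∈ restrictTotalDegree σ R a) (hq : q ∈ restrictTotalDegree σ R b) :
    p * q ∈ restrictTotalDegree σ R (a + b) := by
  rw [mem_restrictTotalDegree] at hp hq ⊢
  exact (totalDegree_mul p q).trans (add_le_add hp hq)

theorem pow_mem_restrictTotalDegree {a : ℕ} {p : MvPolynomial σ R}
    (hp : p ∈ restrictTotalDegree σ R a) (k : ℕ) : p ^ k ∈ restrictTotalDegree σ R (k * a) := by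
  rw [mem_restrictTotalDegree] at hp ⊢
  exact (totalDegree_pow p k).trans (Nat.mul_le_mul_left k hp)

theorem restrictTotalDegree_mono {a b : ℕ} (h : a ≤ b) :
    restrictTotalDegree σ R a ≤ restrictTotalDegree σ R b := fun p hp ↦ by
  rw [mem_restrictTotalDegree] at hp ⊢
  exact hp.trans h

variable (σ R) in
/-- The univariate polynomials all of whose coefficients are multivariate polynomials of total
degree at most `a`. -/
def restrictCoeffDegree (a : ℕ) : Submodule R (MvPolynomial σ R)[X] where
  carrier := {p | ∀ i, p.coeff i ∈ restrictTotalDegree σ R a}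
  add_mem' hp hq i := by
    rw [Polynomial.coeff_add]
    exact add_mem (hp i) (hq i)
  zero_mem' _ := zero_mem _
  smul_mem' r p hp i := by
    rw [Polynomial.coeff_smul]
    exact Submodule.smul_mem _ r (hp i)

variable {a b : ℕ} {p q : (MvPolynomial σ R)[X]}

theorem one_mem_restrictCoeffDegree : 1 ∈ restrictCoeffDegree σ R 0 := fun i ↦ by
  rw [Polynomial.coeff_one, mem_restrictTotalDegree]
  split_ifs <;> simp

theorem mul_mem_restrictCoeffDegree (hp : p ∈ restrictCoeffDegree σ R a)
    (hq : q ∈ restrictCoeffDegree σ R b) : p * q ∈ restrictCoeffDegree σ R (a + b) := fun i ↦ by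
  rw [Polynomial.coeff_mul]
  exact sum_mem fun _ _ ↦ mul_mem_restrictTotalDegree (hp _) (hq _)

theorem prod_mem_restrictCoeffDegree {ι : Type*} {s : Finset ι} {f : ι → (MvPolynomial σ R)[X]}
    (hf : ∀ i ∈ s, f i ∈ restrictCoeffDegree σ R a) :
    ∏ i ∈ s, f i ∈ restrictCoeffDegree σ R (s.card * a) := by
  induction s using Finset.cons_induction with
  | empty => simpa using one_mem_restrictCoeffDegree
  | cons j s hj ih =>
    rw [Finset.forall_mem_cons] at hf
    rw [Finset.prod_cons, Finset.card_cons, Nat.succ_mul, add_comm]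
    exact mul_mem_restrictCoeffDegree hf.1 (ih hf.2)

theorem pow_mem_restrictCoeffDegree (hp : p ∈ restrictCoeffDegree σ R a) (k : ℕ) :
    p ^ k ∈ restrictCoeffDegree σ R (k * a) := by
  simpa using prod_mem_restrictCoeffDegree (s := Finset.range k) fun _ _ ↦ hp

theorem restrictCoeffDegree_mono (h : a ≤ b) :
    restrictCoeffDegree σ R a ≤ restrictCoeffDegree σ R b :=
  fun _ hp i ↦ restrictTotalDegree_mono h (hp i)

theorem derivative_mem_restrictCoeffDegree (hp : p ∈ restrictCoeffDegree σ R a) :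
    Polynomial.derivative p ∈ restrictCoeffDegree σ R a := fun i ↦ by
  rw [Polynomial.coeff_derivative, ← Nat.cast_succ, ← nsmul_eq_mul']
  exact nsmul_mem (hp _) _

theorem charmatrix_mem_restrictCoeffDegree {n : Type*} [Fintype n] [DecidableEq n]
    {M : Matrix n n (MvPolynomial σ R)} (hM : ∀ i j, M i j ∈ restrictTotalDegree σ R a) (i j : n) :
    M.charmatrix i j ∈ restrictCoeffDegree σ R a := by
  rw [Matrix.charmatrix_apply]
  refine sub_mem (fun l ↦ ?_) fun l ↦ ?_
  · rw [Matrix.diagonal_apply, mem_restrictTotalDegree]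
    split_ifs
    · rw [Polynomial.coeff_X]
      split_ifs <;> simp
    · simp
  · rw [Polynomial.coeff_C]
    split_ifs
    exacts [hM i j, zero_mem _]

theorem charpoly_mem_restrictCoeffDegree {n : Type*} [Fintype n] [DecidableEq n]
    {M : Matrix n n (MvPolynomial σ R)} (hM : ∀ i j, M i j ∈ restrictTotalDegree σ R a) :
    M.charpoly ∈ restrictCoeffDegree σ R (Fintype.card n * a) := by
  rw [Matrix.charpoly, Matrix.det_apply]
  refine sum_mem fun τ _ ↦ ?_
  rw [Units.smul_def]
  exact zsmul_mem
    (prod_mem_restrictCoeffDegree fun i _ ↦ charmatrix_mem_restrictCoeffDegree hM _ _) _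

end CoeffDegree

section HermiteMatrix

open Finset.HasAntidiagonal
open scoped Polynomial

theorem sum_map_pow_eq_mul_esymm_sub_sum {R : Type*} [CommRing R] (s : Multiset R) {k : ℕ}
    (hk : 0 < k) :
    (s.map (· ^ k)).sum = (-1) ^ (k + 1) * k * s.esymm k -
      ∑ a ∈ antidiagonal k with a.1 ∈ Set.Ioo 0 k,
        (-1) ^ a.1 * s.esymm a.1 * (s.map (· ^ a.2)).sum := by
  classical
  have hpsum (l : ℕ) : aeval (fun x : s ↦ (x : R)) (psum s R l) = (s.map (· ^ l)).sum := by
    simp only [psum, map_sum, map_pow, aeval_X]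
    exact congrArg Multiset.sum <| (Multiset.map_map (· ^ l) _ _).symm.trans <|
      congrArg _ s.map_univ_coe
  have hesymm (l : ℕ) : aeval (fun x : s ↦ (x : R)) (esymm s R l) = s.esymm l := by
    rw [aeval_esymm_eq_multiset_esymm, Multiset.map_univ_coe]
  simpa only [map_sub, map_sum, map_mul, map_pow, map_neg, map_one, map_natCast, hpsum, hesymm]
    using congrArg (aeval fun x : s ↦ (x : R)) (psum_eq_mul_esymm_sub_sum s R k hk)

/-- The complex roots of `P`, multiplied by its leading coefficient. The symmetric functions of
these numbers are polynomials in the coefficients of `P`. -/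
noncomputable def scaledRoots (P : ℝ[X]) : Multiset ℂ :=
  (P.aroots ℂ).map (P.leadingCoeff * ·)

theorem esymm_scaledRoots (P : ℝ[X]) (i : ℕ) :
    (scaledRoots P).esymm i = P.leadingCoeff ^ i * (P.aroots ℂ).esymm i := by
  rw [scaledRoots, Multiset.esymm, Multiset.powersetCard_map, Multiset.map_map, Multiset.esymm,
    ← Multiset.sum_map_mul_left]
  refine congrArg Multiset.sum (Multiset.map_congr rfl fun t ht ↦ ?_)
  rw [Function.comp_apply, Multiset.prod_map_mul, Multiset.map_const', Multiset.prod_replicate,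
    (Multiset.mem_powersetCard.mp ht).2, Multiset.map_id']

theorem card_aroots (P : ℝ[X]) : (P.aroots ℂ).card = P.natDegree := by
  rw [← (IsAlgClosed.splits (P.map (algebraMap ℝ ℂ))).natDegree_eq_card_roots,
    Polynomial.natDegree_map]

theorem esymm_scaledRoots_of_natDegree_lt {P : ℝ[X]} {i : ℕ} (hi : P.natDegree < i) :
    (scaledRoots P).esymm i = 0 := by
  have hcard : (scaledRoots P).card < i := by rwa [scaledRoots, Multiset.card_map, card_aroots]
  rw [Multiset.esymm, Multiset.powersetCard_eq_empty _ hcard, Multiset.map_zero,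
    Multiset.sum_zero]

theorem esymm_scaledRoots_succ {P : ℝ[X]} {i : ℕ} (hi : i < P.natDegree) :
    (scaledRoots P).esymm (i + 1) =
      (-1) ^ (i + 1) * P.leadingCoeff ^ i * P.coeff (P.natDegree - (i + 1)) := by
  have hvieta := Polynomial.coeff_eq_esymm_roots_of_splits
    (IsAlgClosed.splits (P.map (algebraMap ℝ ℂ))) (k := P.natDegree - (i + 1))
    (by rw [Polynomial.natDegree_map]; exact Nat.sub_le _ _)
  rw [Polynomial.coeff_map, Polynomial.leadingCoeff_map, Polynomial.natDegree_map,
    Nat.sub_sub_self hi, Complex.coe_algebraMap] at hvieta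
  have hsign : ((-1) ^ (i + 1) : ℂ) * (-1) ^ (i + 1) = 1 := by rw [← mul_pow]; simp
  rw [hvieta, esymm_scaledRoots, Polynomial.aroots, Nat.succ_eq_add_one]
  linear_combination (-(P.leadingCoeff : ℂ) ^ (i + 1) *
    (P.map (algebraMap ℝ ℂ)).roots.esymm (i + 1)) * hsign

theorem sum_aroots_aeval_mul_pow {P G : ℝ[X]} {N : ℕ} (hN : G.natDegree ≤ N) (k : ℕ) :
    ((P.aroots ℂ).map fun a : ℂ ↦
      Polynomial.aeval a (Polynomial.C (P.leadingCoeff ^ N) * G) * (P.leadingCoeff * a) ^ k).sum =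
      ∑ l ∈ Finset.range (N + 1), G.coeff l * (P.leadingCoeff ^ (N - l) *
        ((scaledRoots P).map (· ^ (l + k))).sum) := by
  simp only [scaledRoots, Multiset.map_map, ← Multiset.sum_map_mul_left, Function.comp_apply]
  rw [← Multiset.sum_map_sum]
  refine congrArg Multiset.sum (Multiset.map_congr rfl fun a _ ↦ ?_)
  rw [map_mul, Polynomial.aeval_C, Polynomial.aeval_eq_sum_range' (Nat.lt_succ_of_le hN),
    Finset.mul_sum, Finset.sum_mul]
  refine Finset.sum_congr rfl fun l hl ↦ ?_
  have hl : l ≤ N := Nat.lt_succ_iff.mp (Finset.mem_range.mp hl)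
  rw [← Nat.sub_add_cancel hl, Complex.coe_algebraMap, Complex.real_smul]
  simp only [Nat.add_sub_cancel]
  push_cast
  ring

variable {σ : Type*} {a b N : ℕ} {p g : (MvPolynomial σ ℝ)[X]}

theorem exists_eval_eq_esymm_scaledRoots (hp : p ∈ restrictCoeffDegree σ ℝ a) (m i : ℕ) :
    ∃ E ∈ restrictTotalDegree σ ℝ (i * a), ∀ x, (p.map (eval x)).natDegree = m →
      (eval x E : ℂ) = (scaledRoots (p.map (eval x))).esymm i := by
  obtain _ | i := i
  · exact ⟨1, by simp [mem_restrictTotalDegree], fun x _ ↦ by simp [Multiset.esymm]⟩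
  obtain hi | hi := lt_or_ge i m
  · refine ⟨C ((-1) ^ (i + 1)) * (p.coeff m ^ i * p.coeff (m - (i + 1))), ?_, fun x hx ↦ ?_⟩
    · rw [C_mul', Nat.succ_mul]
      exact Submodule.smul_mem _ _
        (mul_mem_restrictTotalDegree (pow_mem_restrictTotalDegree (hp m) i) (hp _))
    · subst hx
      rw [esymm_scaledRoots_succ hi, Polynomial.leadingCoeff, Polynomial.coeff_map,
        Polynomial.coeff_map]
      simp [mul_assoc]
  · refine ⟨0, zero_mem _, fun x hx ↦ ?_⟩
    rw [esymm_scaledRoots_of_natDegree_lt (by lia), map_zero, Complex.ofReal_zero]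

theorem exists_eval_eq_sum_scaledRoots_pow (hp : p ∈ restrictCoeffDegree σ ℝ a) (m k : ℕ) :
    ∃ S ∈ restrictTotalDegree σ ℝ (k * a), ∀ x, (p.map (eval x)).natDegree = m →
      (eval x S : ℂ) = ((scaledRoots (p.map (eval x))).map (· ^ k)).sum := by
  induction k using Nat.strong_induction_on with
  | _ k ih =>
  obtain rfl | hk := k.eq_zero_or_pos
  · refine ⟨C (m : ℝ), by simp [mem_restrictTotalDegree, -map_natCast], fun x hx ↦ ?_⟩
    simp [scaledRoots, card_aroots, hx]
  choose E hE hEx using exists_eval_eq_esymm_scaledRoots hp m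
  choose! S hS hSx using ih
  refine ⟨C ((-1) ^ (k + 1) * k : ℝ) * E k -
    ∑ l ∈ antidiagonal k with l.1 ∈ Set.Ioo 0 k,
      C ((-1) ^ l.1 : ℝ) * (E l.1 * S l.2), sub_mem ?_ (sum_mem fun l hl ↦ ?_), fun x hx ↦ ?_⟩
  · rw [C_mul']
    exact Submodule.smul_mem _ _ (hE k)
  · obtain ⟨hl, hl0, -⟩ := Finset.mem_filter.mp hl
    rw [mem_antidiagonal] at hl
    rw [C_mul', ← hl, Nat.add_mul]
    exact Submodule.smul_mem _ _ (mul_mem_restrictTotalDegree (hE _) (hS _ (by lia)))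
  · rw [sum_map_pow_eq_mul_esymm_sub_sum _ hk, map_sub, map_sum, Complex.ofReal_sub,
      Complex.ofReal_sum, map_mul, eval_C, Complex.ofReal_mul, hEx k x hx]
    refine congrArg₂ (· - ·) (by push_cast; rfl) (Finset.sum_congr rfl fun l hl ↦ ?_)
    obtain ⟨hl, hl0, -⟩ := Finset.mem_filter.mp hl
    rw [mem_antidiagonal] at hl
    rw [map_mul, map_mul, eval_C, Complex.ofReal_mul, Complex.ofReal_mul, hEx _ x hx,
      hSx _ (by lia) x hx]
    push_cast
    ring

theorem exists_hermiteMatrix (hp : p ∈ restrictCoeffDegree σ ℝ a)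
    (hg : g ∈ restrictCoeffDegree σ ℝ b) (hN : g.natDegree ≤ N) (hN2 : Even N) (m : ℕ) :
    ∃ H : Matrix (Fin m) (Fin m) (MvPolynomial σ ℝ), H.IsSymm ∧
      (∀ i j, H i j ∈ restrictTotalDegree σ ℝ (b + (N + 2 * m) * a)) ∧
      ∀ x, p.map (eval x) ≠ 0 → (p.map (eval x)).natDegree = m →
        signature (H.map (eval x)).toQuadraticForm' =
          tarskiQuery (p.map (eval x)) (g.map (eval x)) := by
  choose S hS hSx using exists_eval_eq_sum_scaledRoots_pow hp m
  refine ⟨.of fun i j ↦ ∑ l ∈ Finset.range (N + 1),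
    g.coeff l * (p.coeff m ^ (N - l) * S (l + (i + j))), .ext fun i j ↦ ?_,
    fun i j ↦ ?_, fun x hpx hm ↦ ?_⟩
  · simp only [Matrix.of_apply, add_comm (i : ℕ)]
  · rw [Matrix.of_apply]
    refine sum_mem fun l hl ↦ restrictTotalDegree_mono ?_ <| mul_mem_restrictTotalDegree (hg l) <|
      mul_mem_restrictTotalDegree (pow_mem_restrictTotalDegree (hp m) _) (hS _)
    rw [← Nat.add_mul]
    refine Nat.add_le_add_left (Nat.mul_le_mul_right a ?_) b
    have := Finset.mem_range.mp hl
    lia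
  · set P := p.map (eval x)
    have hc : P.leadingCoeff ≠ 0 := Polynomial.leadingCoeff_ne_zero.mpr hpx
    rw [← tarskiQuery_C_mul (hN2.pow_pos hc)]
    refine signature_hermite hm.le hc fun i j ↦ ?_
    rw [sum_aroots_aeval_mul_pow (Polynomial.natDegree_map_le.trans hN), Matrix.map_apply,
      Matrix.of_apply, map_sum, Complex.ofReal_sum]
    refine Finset.sum_congr rfl fun l _ ↦ ?_
    simp only [map_mul, map_pow, Complex.ofReal_mul, Complex.ofReal_pow, hSx _ x hm,
      Polynomial.coeff_map, Polynomial.leadingCoeff, P, hm]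

/-- `x` and `y` give the same sign to every polynomial of `𝒬`. -/
def SignEq {σ : Type*} (𝒬 : Finset (MvPolynomial σ ℝ)) (x y : σ → ℝ) : Prop :=
  ∀ q ∈ 𝒬, SignType.sign (eval x q) = SignType.sign (eval y q)

theorem exists_signEq_imp_tarskiQuery_eq (hp : p ∈ restrictCoeffDegree σ ℝ a)
    (hg : g ∈ restrictCoeffDegree σ ℝ b) (hN : g.natDegree ≤ N) (hN2 : Even N) (m : ℕ) :
    ∃ 𝒬 : Finset (MvPolynomial σ ℝ), 𝒬.card ≤ m + 1 ∧
      (∀ q ∈ 𝒬, q.totalDegree ≤ m * (b + (N + 2 * m) * a)) ∧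
      ∀ x y, SignEq 𝒬 x y → p.map (eval x) ≠ 0 → p.map (eval y) ≠ 0 →
        (p.map (eval x)).natDegree = m → (p.map (eval y)).natDegree = m →
        tarskiQuery (p.map (eval x)) (g.map (eval x)) =
          tarskiQuery (p.map (eval y)) (g.map (eval y)) := by
  classical
  obtain ⟨H, hsymm, hdeg, hH⟩ := exists_hermiteMatrix hp hg hN hN2 m
  refine ⟨(Finset.range (m + 1)).image H.charpoly.coeff, ?_, ?_, fun x y hxy hx hy hmx hmy ↦ ?_⟩
  · simpa using Finset.card_image_le (s := Finset.range (m + 1)) (f := H.charpoly.coeff)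
  · intro q hq
    obtain ⟨l, -, rfl⟩ := Finset.mem_image.mp hq
    simpa [mem_restrictTotalDegree] using charpoly_mem_restrictCoeffDegree hdeg l
  · have hherm (x) : (H.map (eval x)).IsHermitian :=
      Matrix.IsHermitian.ext fun i j ↦ by simp [hsymm.apply i j]
    rw [← hH x hx hmx, ← hH y hy hmy]
    refine signature_congr_of_sign_charpoly (hherm x) (hherm y) fun l hl ↦ ?_
    rw [Fintype.card_fin] at hl
    rw [Matrix.charpoly_map, Matrix.charpoly_map, Polynomial.coeff_map, Polynomial.coeff_map]
    exact hxy _ (Finset.mem_image_of_mem _ (Finset.mem_range_succ_iff.mpr hl))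

end HermiteMatrix

section SignVectors

open scoped Polynomial

/-- The coefficients of the quadratic polynomial taking on `{-1, 0, 1}` the value `2` at `s` and `0`
elsewhere. -/
def twiceIndicatorCoeff (s : SignType) : Fin 3 → ℤ :=
  ![2 - 2 * (s : ℤ) ^ 2, s, 3 * (s : ℤ) ^ 2 - 2]

theorem sum_twiceIndicatorCoeff_mul_pow : ∀ s t : SignType,
    ∑ e, twiceIndicatorCoeff s e * (t : ℤ) ^ (e : ℕ) = if t = s then 2 else 0 := by
  decide

variable {ι κ α β : Type*} [Fintype κ] {A : Finset α} {B : Finset β}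

theorem sum_prod_ite_congr {σ : α → κ → SignType} {τ : β → κ → SignType}
    (h : ∀ e : κ → Fin 3, ∑ a ∈ A, ∏ k, (σ a k : ℤ) ^ (e k : ℕ) =
      ∑ b ∈ B, ∏ k, (τ b k : ℤ) ^ (e k : ℕ)) (c : κ → SignType) :
    ∑ a ∈ A, ∏ k, (if σ a k = c k then 2 else 0 : ℤ) =
      ∑ b ∈ B, ∏ k, (if τ b k = c k then 2 else 0 : ℤ) := by
  classical
  have hprod (t : κ → SignType) : ∏ k, (if t k = c k then 2 else 0 : ℤ) =
      ∑ e : κ → Fin 3, (∏ k, twiceIndicatorCoeff (c k) (e k)) * ∏ k, (t k : ℤ) ^ (e k : ℕ) := by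
    simp only [← sum_twiceIndicatorCoeff_mul_pow, Finset.prod_univ_sum, Fintype.piFinset_univ,
      Finset.prod_mul_distrib]
  simp only [hprod]
  rw [Finset.sum_comm, Finset.sum_comm (s := B)]
  simp only [← Finset.mul_sum, h]

theorem exists_forall_mem_range [Nonempty ι] (hB : B.card ≤ Fintype.card κ) (g : β → ι) :
    ∃ idx : κ → ι, ∀ b ∈ B, g b ∈ Set.range idx := by
  obtain ⟨emb⟩ := Function.Embedding.nonempty_of_card_le ((Fintype.card_coe B).trans_le hB)
  refine ⟨Function.extend emb (fun b ↦ g b) fun _ ↦ Classical.arbitrary ι, fun b hb ↦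
    ⟨emb ⟨b, hb⟩, emb.injective.extend_apply _ _ _⟩⟩

/-- A sign vector missing from a finite family is separated from its members by as many coordinates
as the family has members, hence by a product of that many quadratic polynomials in the
coordinates. -/
theorem exists_sign_vector_eq [Nonempty ι] {σ : α → ι → SignType} {τ : β → ι → SignType}
    (hB : B.card ≤ Fintype.card κ)
    (h : ∀ (idx : κ → ι) (e : κ → Fin 3), ∑ a ∈ A, ∏ k, (σ a (idx k) : ℤ) ^ (e k : ℕ) =
      ∑ b ∈ B, ∏ k, (τ b (idx k) : ℤ) ^ (e k : ℕ))
    {a : α} (ha : a ∈ A) : ∃ b ∈ B, τ b = σ a := by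
  by_contra! hne
  choose! g hg using fun b hb ↦ Function.ne_iff.mp (hne b hb)
  obtain ⟨idx, hidx⟩ := exists_forall_mem_range hB g
  have hsum := sum_prod_ite_congr (σ := fun a ↦ σ a ∘ idx) (τ := fun b ↦ τ b ∘ idx) (h idx)
    (σ a ∘ idx)
  refine hsum.not_gt ?_
  rw [Finset.sum_eq_zero fun b hb ↦ ?_]
  · refine Finset.sum_pos' (fun _ _ ↦ Finset.prod_nonneg fun _ _ ↦ ?_) ⟨a, ha, ?_⟩
    · split_ifs <;> norm_num
    · simp
  · obtain ⟨k, hk⟩ := hidx b hb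
    refine Finset.prod_eq_zero (Finset.mem_univ k) (if_neg ?_)
    rw [Function.comp_apply, Function.comp_apply, hk]
    exact hg b hb

theorem tarskiQuery_prod_pow (P : ℝ[X]) (g : κ → ℝ[X]) (e : κ → ℕ) :
    tarskiQuery P (∏ k, g k ^ e k) =
      ∑ r ∈ P.roots.toFinset, ∏ k, (SignType.sign ((g k).eval r) : ℤ) ^ e k := by
  refine Finset.sum_congr rfl fun r _ ↦ ?_
  let castSign : ℝ →*₀ ℤ := SignType.castHom.comp signHom
  calc (SignType.sign ((∏ k, g k ^ e k).eval r) : ℤ) = castSign (∏ k, (g k).eval r ^ e k) := by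
        simp only [Polynomial.eval_prod, Polynomial.eval_pow]; rfl
    _ = ∏ k, castSign ((g k).eval r) ^ e k := by simp only [map_prod, map_pow]

theorem exists_sign_eval_eq_of_tarskiQuery [Nonempty ι] {P P' : ℝ[X]} {f f' : ι → ℝ[X]}
    (hP' : P'.natDegree ≤ Fintype.card κ)
    (h : ∀ (idx : κ → ι) (e : κ → Fin 3), tarskiQuery P (∏ k, f (idx k) ^ (e k : ℕ)) =
      tarskiQuery P' (∏ k, f' (idx k) ^ (e k : ℕ))) {r : ℝ} (hr : r ∈ P.roots) :
    ∃ r', ∀ i, SignType.sign ((f' i).eval r') = SignType.sign ((f i).eval r) := by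
  have hcard : P'.roots.toFinset.card ≤ Fintype.card κ :=
    (Multiset.toFinset_card_le _).trans (P'.card_roots'.trans hP')
  simp only [tarskiQuery_prod_pow] at h
  obtain ⟨r', -, hr'⟩ := exists_sign_vector_eq (σ := fun r i ↦ SignType.sign ((f i).eval r))
    (τ := fun r i ↦ SignType.sign ((f' i).eval r)) hcard h (Multiset.mem_toFinset.mpr hr)
  exact ⟨r', congrFun hr'⟩

end SignVectors

section CriticalPolynomials

open Filter
open scoped Polynomial

variable {R S ι : Type*}

/-- The polynomials of a family together with the derivatives of their pairwise products. By Rolle's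
theorem the nonzero ones vanish on every bounded sign cell of the family. -/
noncomputable def criticalPoly [CommRing R] (f : ι → R[X]) : ι ⊕ ι × ι → R[X] :=
  Sum.elim f fun p ↦ Polynomial.derivative (f p.1 * f p.2)

theorem map_criticalPoly [CommRing R] [CommRing S] (φ : R →+* S) (f : ι → R[X]) (c : ι ⊕ ι × ι) :
    (criticalPoly f c).map φ = criticalPoly (fun i ↦ (f i).map φ) c := by
  rcases c with i | p
  · rfl
  · simp [criticalPoly, Polynomial.derivative_map]

theorem natDegree_criticalPoly_le [CommRing R] {f : ι → R[X]} {n : ℕ}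
    (hf : ∀ i, (f i).natDegree ≤ n) (c : ι ⊕ ι × ι) : (criticalPoly f c).natDegree ≤ 2 * n := by
  rcases c with i | ⟨i, j⟩
  · exact (hf i).trans (Nat.le_mul_of_pos_left n two_pos)
  · calc (criticalPoly f (.inr (i, j))).natDegree ≤ (f i * f j).natDegree :=
          (Polynomial.natDegree_derivative_le _).trans (Nat.sub_le _ _)
      _ ≤ n + n := Polynomial.natDegree_mul_le_of_le (hf i) (hf j)
      _ = 2 * n := (two_mul n).symm

theorem criticalPoly_mem_restrictCoeffDegree {σ : Type*} [CommRing R]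
    {f : ι → (MvPolynomial σ R)[X]} {a : ℕ} (hf : ∀ i, f i ∈ restrictCoeffDegree σ R a)
    (c : ι ⊕ ι × ι) : criticalPoly f c ∈ restrictCoeffDegree σ R (2 * a) := by
  rcases c with i | ⟨i, j⟩
  · exact restrictCoeffDegree_mono (Nat.le_mul_of_pos_left a two_pos) (hf i)
  · rw [two_mul]
    exact derivative_mem_restrictCoeffDegree (mul_mem_restrictCoeffDegree (hf i) (hf j))

variable {f f' : ι → ℝ[X]} {u v : ℝ}

theorem zero_mem_uIcc_of_sign_ne {a b : ℝ} (h : SignType.sign a ≠ SignType.sign b) :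
    0 ∈ Set.uIcc a b := by
  grind [sign_apply, Set.mem_uIcc]

theorem sign_eval_eq_of_forall_mem_uIcc
    (h : ∀ x ∈ Set.uIcc u v, ∀ i, x ∉ (f i).roots) (i : ι) :
    SignType.sign ((f i).eval u) = SignType.sign ((f i).eval v) := by
  rcases eq_or_ne (f i) 0 with h0 | h0
  · simp only [h0, Polynomial.eval_zero]
  by_contra hne
  obtain ⟨x, hx, hx0⟩ := intermediate_value_uIcc (f i).continuousOn (zero_mem_uIcc_of_sign_ne hne)
  exact h x hx i ((Polynomial.mem_roots h0).mpr hx0)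

theorem exists_mem_roots_criticalPoly {i j : ι} {a b : ℝ} (hab : a < b) (ha : a ∈ (f i).roots)
    (hb : b ∈ (f j).roots) : ∃ ξ ∈ Set.Ioo a b, ξ ∈ (criticalPoly f (.inr (i, j))).roots := by
  have h0 : f i * f j ≠ 0 :=
    mul_ne_zero (Polynomial.ne_zero_of_mem_roots ha) (Polynomial.ne_zero_of_mem_roots hb)
  have ha0 : (f i * f j).eval a = 0 := by
    rw [Polynomial.eval_mul, (Polynomial.isRoot_of_mem_roots ha).eq_zero, zero_mul]
  have hb0 : (f i * f j).eval b = 0 := by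
    rw [Polynomial.eval_mul, (Polynomial.isRoot_of_mem_roots hb).eq_zero, mul_zero]
  obtain ⟨ξ, hξ, hξ0⟩ :=
    exists_deriv_eq_zero hab (f i * f j).continuousOn (ha0.trans hb0.symm)
  rw [Polynomial.deriv] at hξ0
  refine ⟨ξ, hξ, (Polynomial.mem_roots fun hder ↦ ?_).mpr hξ0⟩
  obtain ⟨c, hc⟩ := Polynomial.natDegree_eq_zero.mp (Polynomial.derivative_eq_zero.mp hder)
  rw [← hc, Polynomial.eval_C] at ha0
  exact h0 (by rw [← hc, ha0, Polynomial.C_0])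

/-- The three cases are: `v` is a root of a member of the family or lies between two consecutive
roots, `v` is larger than all roots, `v` is smaller than all roots. -/
theorem exists_mem_roots_criticalPoly_or_eventually [Finite ι] (f : ι → ℝ[X]) (v : ℝ) :
    (∃ c, ∃ ξ ∈ (criticalPoly f c).roots,
        ∀ i, SignType.sign ((f i).eval ξ) = SignType.sign ((f i).eval v)) ∨
      (∀ᶠ y in atTop, ∀ i, SignType.sign ((f i).eval y) = SignType.sign ((f i).eval v)) ∨
      ∀ᶠ y in atBot, ∀ i, SignType.sign ((f i).eval y) = SignType.sign ((f i).eval v) := by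
  classical
  cases nonempty_fintype ι
  let Z : Finset ℝ := Finset.univ.biUnion fun i ↦ (f i).roots.toFinset
  have mem_Z {x : ℝ} : x ∈ Z ↔ ∃ i, x ∈ (f i).roots := by simp [Z]
  by_cases hv : v ∈ Z
  · obtain ⟨i, hi⟩ := mem_Z.mp hv
    exact .inl ⟨.inl i, v, hi, fun _ ↦ rfl⟩
  have sign_eq {y : ℝ} (hy : ∀ x ∈ Set.uIcc y v, x ∉ Z) :=
    sign_eval_eq_of_forall_mem_uIcc fun x hx i hi ↦ hy x hx (mem_Z.mpr ⟨i, hi⟩)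
  by_cases hright : ∃ b ∈ Z, v < b; swap
  · refine .inr (.inl ?_)
    filter_upwards [eventually_ge_atTop v] with y hy
    refine sign_eq fun x hx hxZ ↦ hright ⟨x, hxZ, ?_⟩
    rw [Set.uIcc_of_ge hy] at hx
    exact hx.1.lt_of_ne fun h ↦ hv (h ▸ hxZ)
  by_cases hleft : ∃ a ∈ Z, a < v; swap
  · refine .inr (.inr ?_)
    filter_upwards [eventually_le_atBot v] with y hy
    refine sign_eq fun x hx hxZ ↦ hleft ⟨x, hxZ, ?_⟩
    rw [Set.uIcc_of_le hy] at hx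
    exact hx.2.lt_of_ne fun h ↦ hv (h ▸ hxZ)
  obtain ⟨b, hb, hvb, hb_min⟩ := Finset.exists_next_right hright
  obtain ⟨a, ha, hav, ha_max⟩ := Finset.exists_next_left hleft
  obtain ⟨i, hi⟩ := mem_Z.mp ha
  obtain ⟨j, hj⟩ := mem_Z.mp hb
  obtain ⟨ξ, hξ, hξ_root⟩ := exists_mem_roots_criticalPoly (hav.trans hvb) hi hj
  refine .inl ⟨.inr (i, j), ξ, hξ_root, sign_eq fun x hx hxZ ↦ ?_⟩
  have hx_mem : x ∈ Set.Ioo a b := Set.ordConnected_Ioo.uIcc_subset hξ ⟨hav, hvb⟩ hx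
  rcases lt_trichotomy x v with hlt | rfl | hgt
  · exact (ha_max x hxZ hlt).not_gt hx_mem.1
  · exact hv hxZ
  · exact (hb_min x hxZ hgt).not_gt hx_mem.2

theorem eventually_atTop_sign_eval (g : ℝ[X]) :
    ∀ᶠ x in atTop, SignType.sign (g.eval x) = SignType.sign g.leadingCoeff := by
  rcases lt_or_ge 0 g.degree with hd | hd
  · rcases lt_trichotomy g.leadingCoeff 0 with h | h | h
    · filter_upwards [(g.tendsto_atBot_of_leadingCoeff_nonpos hd h.le).eventually_lt_atBot 0]
        with x hx
      rw [sign_neg hx, sign_neg h]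
    · simp [Polynomial.leadingCoeff_eq_zero.mp h]
    · filter_upwards [(g.tendsto_atTop_of_leadingCoeff_nonneg hd h.le).eventually_gt_atTop 0]
        with x hx
      rw [sign_pos hx, sign_pos h]
  · rw [Polynomial.eq_C_of_degree_le_zero hd]
    simp

theorem eventually_atBot_sign_eval (g : ℝ[X]) :
    ∀ᶠ x in atBot,
      SignType.sign (g.eval x) = SignType.sign ((-1) ^ g.natDegree * g.leadingCoeff) := by
  filter_upwards [tendsto_neg_atBot_atTop.eventually
    (eventually_atTop_sign_eval (g.comp (-Polynomial.X)))] with x hx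
  rw [Polynomial.eval_comp, Polynomial.eval_neg, Polynomial.eval_X, neg_neg,
    Polynomial.leadingCoeff_comp (by simp), mul_comm] at hx
  simpa using hx

theorem exists_sign_eval_eq_of_eventually [Finite ι] {l : Filter ℝ} [l.NeBot] {s : ι → SignType}
    (hf : ∀ᶠ y in l, ∀ i, SignType.sign ((f i).eval y) = SignType.sign ((f i).eval v))
    (hfs : ∀ i, ∀ᶠ y in l, SignType.sign ((f i).eval y) = s i)
    (hfs' : ∀ i, ∀ᶠ y in l, SignType.sign ((f' i).eval y) = s i) :
    ∃ v', ∀ i, SignType.sign ((f' i).eval v') = SignType.sign ((f i).eval v) := by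
  obtain ⟨y, hy, hys, hys'⟩ :=
    (hf.and ((eventually_all.mpr hfs).and (eventually_all.mpr hfs'))).exists
  exact ⟨y, fun i ↦ by rw [hys', ← hys, hy]⟩

theorem exists_forall_sign_eval_eq {κ : Type*} [Finite ι] [Fintype κ]
    (hdeg : ∀ i, (f i).natDegree = (f' i).natDegree)
    (hlc : ∀ i, SignType.sign (f i).leadingCoeff = SignType.sign (f' i).leadingCoeff)
    (hcrit : ∀ c, (criticalPoly f' c).natDegree ≤ Fintype.card κ)
    (htq : ∀ c (idx : κ → ι) (e : κ → Fin 3), criticalPoly f c ≠ 0 →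
      tarskiQuery (criticalPoly f c) (∏ k, f (idx k) ^ (e k : ℕ)) =
        tarskiQuery (criticalPoly f' c) (∏ k, f' (idx k) ^ (e k : ℕ))) (v : ℝ) :
    ∃ v', ∀ i, SignType.sign ((f' i).eval v') = SignType.sign ((f i).eval v) := by
  rcases exists_mem_roots_criticalPoly_or_eventually f v with ⟨c, ξ, hξ, hξv⟩ | htop | hbot
  · have : Nonempty ι := c.elim (fun i ↦ ⟨i⟩) fun p ↦ ⟨p.1⟩
    obtain ⟨v', hv'⟩ := exists_sign_eval_eq_of_tarskiQuery (hcrit c)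
      (fun idx e ↦ htq c idx e (Polynomial.ne_zero_of_mem_roots hξ)) hξ
    exact ⟨v', fun i ↦ (hv' i).trans (hξv i)⟩
  · exact exists_sign_eval_eq_of_eventually htop (fun i ↦ eventually_atTop_sign_eval (f i))
      fun i ↦ by simpa only [hlc] using eventually_atTop_sign_eval (f' i)
  · exact exists_sign_eval_eq_of_eventually hbot (fun i ↦ eventually_atBot_sign_eval (f i))
      fun i ↦ by simpa only [hdeg, sign_mul, hlc] using eventually_atBot_sign_eval (f' i)

end CriticalPolynomials

section SignEq

open scoped Polynomial

variable {σ : Type*} {x y : σ → ℝ} {p : (MvPolynomial σ ℝ)[X]}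

theorem signEq_union [DecidableEq (MvPolynomial σ ℝ)] {𝒬 𝒬' : Finset (MvPolynomial σ ℝ)} :
    SignEq (𝒬 ∪ 𝒬') x y ↔ SignEq 𝒬 x y ∧ SignEq 𝒬' x y :=
  Finset.forall_mem_union

theorem signEq_biUnion [DecidableEq (MvPolynomial σ ℝ)] {α : Type*} {s : Finset α}
    {𝒬 : α → Finset (MvPolynomial σ ℝ)} :
    SignEq (s.biUnion 𝒬) x y ↔ ∀ a ∈ s, SignEq (𝒬 a) x y :=
  ⟨fun h a ha q hq ↦ h q (Finset.mem_biUnion.mpr ⟨a, ha, hq⟩), fun h q hq ↦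
    have ⟨a, ha, hqa⟩ := Finset.mem_biUnion.mp hq
    h a ha q hqa⟩

theorem SignEq.sign_coeff_map (h : SignEq p.coeffs x y) (n : ℕ) :
    SignType.sign ((p.map (eval x)).coeff n) = SignType.sign ((p.map (eval y)).coeff n) := by
  rw [Polynomial.coeff_map, Polynomial.coeff_map]
  rcases eq_or_ne (p.coeff n) 0 with h0 | h0
  · simp only [h0, map_zero]
  · exact h _ (Polynomial.coeff_mem_coeffs h0)

theorem SignEq.degree_map (h : SignEq p.coeffs x y) :
    (p.map (eval x)).degree = (p.map (eval y)).degree := by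
  have hsupp : (p.map (eval x)).support = (p.map (eval y)).support := by
    ext n
    rw [Polynomial.mem_support_iff, Polynomial.mem_support_iff, ← sign_ne_zero, h.sign_coeff_map,
      sign_ne_zero]
  rw [Polynomial.degree, Polynomial.degree, hsupp]

theorem SignEq.natDegree_map (h : SignEq p.coeffs x y) :
    (p.map (eval x)).natDegree = (p.map (eval y)).natDegree :=
  Polynomial.natDegree_eq_of_degree_eq h.degree_map

theorem SignEq.map_ne_zero (h : SignEq p.coeffs x y) (hx : p.map (eval x) ≠ 0) :
    p.map (eval y) ≠ 0 := by
  rwa [← Polynomial.degree_ne_bot, ← h.degree_map, Polynomial.degree_ne_bot]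

theorem SignEq.sign_leadingCoeff_map (h : SignEq p.coeffs x y) :
    SignType.sign (p.map (eval x)).leadingCoeff = SignType.sign (p.map (eval y)).leadingCoeff := by
  rw [Polynomial.leadingCoeff, h.sign_coeff_map, h.natDegree_map, Polynomial.leadingCoeff]

theorem card_coeffs_le {R : Type*} [Semiring R] (p : R[X]) : p.coeffs.card ≤ p.natDegree + 1 := by
  classical exact Finset.card_image_le.trans p.card_supp_le_succ_natDegree

theorem totalDegree_le_of_mem_coeffs {a : ℕ} (hp : p ∈ restrictCoeffDegree σ ℝ a)
    {q : MvPolynomial σ ℝ} (hq : q ∈ p.coeffs) :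
    q.totalDegree ≤ a := by
  obtain ⟨i, -, rfl⟩ := Polynomial.mem_coeffs_iff.mp hq
  exact (mem_restrictTotalDegree _ _ _).mp (hp i)

end SignEq

section Elimination

open scoped Polynomial

variable {σ : Type*} {p g : (MvPolynomial σ ℝ)[X]} {a b n N : ℕ}

theorem exists_signEq_imp_tarskiQuery_eq_of_natDegree_le (hp : p ∈ restrictCoeffDegree σ ℝ a)
    (hpn : p.natDegree ≤ n) (hg : g ∈ restrictCoeffDegree σ ℝ b) (hN : g.natDegree ≤ N)
    (hN2 : Even N) :
    ∃ 𝒬 : Finset (MvPolynomial σ ℝ), 𝒬.card ≤ (n + 2) ^ 2 ∧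
      (∀ q ∈ 𝒬, q.totalDegree ≤ a + n * (b + (N + 2 * n) * a)) ∧
      ∀ x y, SignEq 𝒬 x y → p.map (eval x) ≠ 0 →
        tarskiQuery (p.map (eval x)) (g.map (eval x)) =
          tarskiQuery (p.map (eval y)) (g.map (eval y)) := by
  classical
  choose 𝒬 hcard hdeg hsign using exists_signEq_imp_tarskiQuery_eq hp hg hN hN2
  refine ⟨p.coeffs ∪ (Finset.range (n + 1)).biUnion 𝒬, ?_, fun q hq ↦ ?_, fun x y hxy hx ↦ ?_⟩
  · calc (p.coeffs ∪ (Finset.range (n + 1)).biUnion 𝒬).card ≤ (n + 1) + (n + 1) * (n + 1) := by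
          refine (Finset.card_union_le _ _).trans (add_le_add ?_ ?_)
          · exact (card_coeffs_le p).trans (Nat.add_le_add_right hpn 1)
          · refine (Finset.card_biUnion_le_card_mul _ _ (n + 1) fun m hm ↦ ?_).trans_eq ?_
            · exact (hcard m).trans (Finset.mem_range.mp hm)
            · rw [Finset.card_range]
      _ ≤ (n + 2) ^ 2 := by nlinarith
  · rcases Finset.mem_union.mp hq with hq | hq
    · exact (totalDegree_le_of_mem_coeffs hp hq).trans (Nat.le_add_right _ _)
    · obtain ⟨m, hm, hq⟩ := Finset.mem_biUnion.mp hq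
      have hmn : m ≤ n := Finset.mem_range_succ_iff.mp hm
      refine (hdeg m q hq).trans (le_add_left ?_)
      gcongr
  · obtain ⟨hcoeffs, hxy⟩ := signEq_union.mp hxy
    have hm : (p.map (eval x)).natDegree ∈ Finset.range (n + 1) :=
      Finset.mem_range_succ_iff.mpr (Polynomial.natDegree_map_le.trans hpn)
    exact hsign _ x y (signEq_biUnion.mp hxy _ hm) hx (hcoeffs.map_ne_zero hx) rfl
      hcoeffs.natDegree_map.symm

/-- The family consists of at most `2 ^ T` polynomials of total degree at most `T`. The two bounds
are coupled so that one variable can be eliminated by passing from `T` to a power of `T`. -/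
structure ComplexityLE (𝒬 : Finset (MvPolynomial σ ℝ)) (T : ℕ) : Prop where
  card_le : 𝒬.card ≤ 2 ^ T
  totalDegree_le : ∀ q ∈ 𝒬, q.totalDegree ≤ T

theorem elimination_degree_le {T : ℕ} (hT : 2 ≤ T) :
    2 * T + 2 * T * (2 * T * (2 * T) + (2 * T * (2 * T) + 2 * (2 * T)) * (2 * T)) ≤ T ^ 9 :=
  calc _ = 16 * T ^ 4 + 24 * T ^ 3 + 2 * T := by ring
    _ ≤ 2 ^ 5 * T ^ 4 := by nlinarith [Nat.pow_le_pow_left hT 3, Nat.pow_le_pow_left hT 2]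
    _ ≤ T ^ 5 * T ^ 4 := Nat.mul_le_mul_right _ (Nat.pow_le_pow_left hT 5)
    _ = T ^ 9 := by ring

theorem elimination_card_le {s T : ℕ} (hT : 2 ≤ T) (hs : s ≤ 2 ^ T) :
    s * (T + 1) + (s + s * s) * (s ^ (2 * T) * 3 ^ (2 * T)) * (2 * T + 2) ^ 2 ≤ 2 ^ T ^ 9 := by
  have hT1 : T + 1 ≤ 2 ^ T := Nat.lt_two_pow_self
  have hpairs : s + s * s ≤ 2 ^ (2 * T + 1) := by
    calc s + s * s ≤ 2 ^ T * 2 ^ T + 2 ^ T * 2 ^ T :=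
          add_le_add (hs.trans (Nat.le_mul_self _)) (Nat.mul_le_mul hs hs)
      _ = 2 ^ (2 * T + 1) := by ring
  have hsquare : (2 * T + 2) ^ 2 ≤ 2 ^ (2 * T + 2) := by
    calc (2 * T + 2) ^ 2 = 4 * (T + 1) ^ 2 := by ring
      _ ≤ 4 * (2 ^ T) ^ 2 := by gcongr
      _ = 2 ^ (2 * T + 2) := by ring
  have hthree : 3 ^ (2 * T) ≤ 2 ^ (4 * T) := by
    calc 3 ^ (2 * T) ≤ (2 ^ 2) ^ (2 * T) := Nat.pow_le_pow_left (by norm_num) _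
      _ = 2 ^ (4 * T) := by rw [← pow_mul]; ring_nf
  calc _ ≤ 2 ^ T * 2 ^ T +
        2 ^ (2 * T + 1) * ((2 ^ T) ^ (2 * T) * 2 ^ (4 * T)) * 2 ^ (2 * T + 2) := by gcongr
    _ = 2 ^ (2 * T) + 2 ^ (2 * T ^ 2 + 8 * T + 3) := by ring
    _ ≤ 2 ^ (2 * T ^ 2 + 8 * T + 3) + 2 ^ (2 * T ^ 2 + 8 * T + 3) := by
        gcongr
        · norm_num
        · omega
    _ = 2 ^ (2 * T ^ 2 + 8 * T + 4) := by ring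
    _ ≤ 2 ^ T ^ 9 := by
        refine Nat.pow_le_pow_right two_pos ?_
        calc 2 * T ^ 2 + 8 * T + 4 ≤ 2 ^ 7 * T ^ 2 := by nlinarith
          _ ≤ T ^ 7 * T ^ 2 := Nat.mul_le_mul_right _ (Nat.pow_le_pow_left hT 7)
          _ = T ^ 9 := by ring

section Step

variable {ι κ : Type*} [Fintype κ]

theorem prod_pow_mem_restrictCoeffDegree {F : ι → (MvPolynomial σ ℝ)[X]}
    (hF : ∀ i, F i ∈ restrictCoeffDegree σ ℝ a) (idx : κ → ι) (e : κ → Fin 3) :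
    ∏ k, F (idx k) ^ (e k : ℕ) ∈ restrictCoeffDegree σ ℝ (Fintype.card κ * (2 * a)) :=
  prod_mem_restrictCoeffDegree fun k _ ↦ restrictCoeffDegree_mono
    (Nat.mul_le_mul_right a (e k).is_le) (pow_mem_restrictCoeffDegree (hF _) _)

theorem natDegree_prod_pow_le {R : Type*} [CommSemiring R] {F : ι → R[X]}
    (hF : ∀ i, (F i).natDegree ≤ n) (idx : κ → ι) (e : κ → Fin 3) :
    (∏ k, F (idx k) ^ (e k : ℕ)).natDegree ≤ Fintype.card κ * (2 * n) := by
  refine (Polynomial.natDegree_prod_le _ _).trans ?_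
  refine (Finset.sum_le_card_nsmul _ _ (2 * n) fun k _ ↦ ?_).trans_eq (smul_eq_mul ..)
  exact (Polynomial.natDegree_pow_le_of_le _ (hF _)).trans (Nat.mul_le_mul_right n (e k).is_le)

theorem exists_complexityLE_imp_exists_sign_eval_eq [Fintype ι] {T : ℕ} (hT : 2 ≤ T)
    (hι : Fintype.card ι ≤ 2 ^ T) {F : ι → (MvPolynomial σ ℝ)[X]}
    (hF : ∀ i, F i ∈ restrictCoeffDegree σ ℝ T) (hdeg : ∀ i, (F i).natDegree ≤ T) :
    ∃ 𝒬 : Finset (MvPolynomial σ ℝ), ComplexityLE 𝒬 (T ^ 9) ∧ ∀ x y, SignEq 𝒬 x y →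
      ∀ v, ∃ v', ∀ i, SignType.sign (((F i).map (eval y)).eval v') =
        SignType.sign (((F i).map (eval x)).eval v) := by
  classical
  choose 𝒬 hcard hdeg𝒬 hsign using
    fun (c : ι ⊕ ι × ι) (idx : Fin (2 * T) → ι) (e : Fin (2 * T) → Fin 3) ↦
      exists_signEq_imp_tarskiQuery_eq_of_natDegree_le
        (criticalPoly_mem_restrictCoeffDegree hF c) (natDegree_criticalPoly_le hdeg c)
        (prod_pow_mem_restrictCoeffDegree hF idx e) (natDegree_prod_pow_le hdeg idx e)
        ((even_two_mul T).mul_left _)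
  rw [Fintype.card_fin] at hdeg𝒬
  let 𝒞 : Finset (MvPolynomial σ ℝ) := Finset.univ.biUnion fun i ↦ (F i).coeffs
  let 𝒯 : Finset (MvPolynomial σ ℝ) := Finset.univ.biUnion fun a : _ × _ × _ ↦ 𝒬 a.1 a.2.1 a.2.2
  refine ⟨𝒞 ∪ 𝒯, ⟨?_, fun q hq ↦ ?_⟩, fun x y hxy v ↦ ?_⟩
  · refine le_trans ?_ (elimination_card_le hT hι)
    refine (Finset.card_union_le _ _).trans (add_le_add ?_ ?_)
    · exact Finset.card_biUnion_le_card_mul _ _ _ fun i _ ↦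
        (card_coeffs_le (F i)).trans (Nat.add_le_add_right (hdeg i) 1)
    · exact (Finset.card_biUnion_le_card_mul _ _ _ fun a _ ↦ hcard a.1 a.2.1 a.2.2).trans_eq
        (by simp)
  · rcases Finset.mem_union.mp hq with hq | hq <;> obtain ⟨a, -, hq⟩ := Finset.mem_biUnion.mp hq
    · exact (totalDegree_le_of_mem_coeffs (hF a) hq).trans (Nat.le_self_pow (by norm_num) T)
    · exact (hdeg𝒬 _ _ _ q hq).trans (elimination_degree_le hT)
  · rw [signEq_union, signEq_biUnion, signEq_biUnion] at hxy
    have hcoeffs (i) : SignEq (F i).coeffs x y := hxy.1 i (Finset.mem_univ i)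
    refine exists_forall_sign_eval_eq (κ := Fin (2 * T)) (fun i ↦ (hcoeffs i).natDegree_map)
      (fun i ↦ (hcoeffs i).sign_leadingCoeff_map) (fun c ↦ ?_) (fun c idx e hne ↦ ?_) v
    · rw [Fintype.card_fin]
      exact natDegree_criticalPoly_le (fun i ↦ Polynomial.natDegree_map_le.trans (hdeg i)) c
    · simp only [← map_criticalPoly, ← Polynomial.map_pow, ← Polynomial.map_prod] at hne ⊢
      exact hsign c idx e x y (hxy.2 (c, idx, e) (Finset.mem_univ _)) hne

end Step

end Elimination

section Projection

variable {σ τ : Type*} {𝒬 : Finset (MvPolynomial σ ℝ)} {T : ℕ}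

theorem signEq_image_rename [DecidableEq (MvPolynomial τ ℝ)] {f : σ → τ} {x y : τ → ℝ} :
    SignEq (𝒬.image (rename f)) x y ↔ SignEq 𝒬 (x ∘ f) (y ∘ f) := by
  simp only [SignEq, Finset.forall_mem_image, eval_rename]

theorem ComplexityLE.image_rename [DecidableEq (MvPolynomial τ ℝ)] (h : ComplexityLE 𝒬 T)
    (f : σ → τ) : ComplexityLE (𝒬.image (rename f)) T where
  card_le := Finset.card_image_le.trans h.card_le
  totalDegree_le := Finset.forall_mem_image.mpr fun q hq ↦
    (totalDegree_rename_le f q).trans (h.totalDegree_le q hq)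

theorem ComplexityLE.exists_eliminate_option {𝒬 : Finset (MvPolynomial (Option σ) ℝ)}
    (h : ComplexityLE 𝒬 T) (hT : 2 ≤ T) :
    ∃ 𝒬' : Finset (MvPolynomial σ ℝ), ComplexityLE 𝒬' (T ^ 9) ∧ ∀ x y, SignEq 𝒬' x y →
      ∀ v, ∃ v', SignEq 𝒬 (Option.elim · v x) (Option.elim · v' y) := by
  obtain ⟨𝒬', hcomplexity, hlift⟩ := exists_complexityLE_imp_exists_sign_eval_eq hT
    (F := fun q : 𝒬 ↦ optionEquivLeft ℝ σ q) (by simpa using h.card_le)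
    (fun q i ↦ (mem_restrictTotalDegree _ _ _).mpr <|
      (totalDegree_coeff_optionEquivLeft_le ..).trans (h.totalDegree_le q q.2))
    (fun q ↦ (natDegree_optionEquivLeft ..).trans_le <|
      (degreeOf_le_totalDegree ..).trans (h.totalDegree_le q q.2))
  refine ⟨𝒬', hcomplexity, fun x y hxy v ↦ ?_⟩
  obtain ⟨v', hv'⟩ := hlift x y hxy v
  refine ⟨v', fun q hq ↦ ?_⟩
  rw [optionEquivLeft_elim_eval, optionEquivLeft_elim_eval, hv' ⟨q, hq⟩]

theorem ComplexityLE.exists_eliminate (hT : 2 ≤ T) (d : ℕ)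
    {𝒬 : Finset (MvPolynomial (Fin d ⊕ σ) ℝ)} (h : ComplexityLE 𝒬 T) :
    ∃ 𝒬' : Finset (MvPolynomial σ ℝ), ComplexityLE 𝒬' (T ^ 9 ^ d) ∧ ∀ x y, SignEq 𝒬' x y →
      ∀ u, ∃ u', SignEq 𝒬 (Sum.elim u x) (Sum.elim u' y) := by
  classical
  induction d generalizing T with
  | zero =>
    refine ⟨𝒬.image (rename (Sum.elim Fin.elim0 id)), by simpa using h.image_rename _,
      fun x y hxy u ↦ ⟨u, ?_⟩⟩
    have hcomp (z : σ → ℝ) : z ∘ Sum.elim Fin.elim0 id = Sum.elim u z := by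
      ext (i | s)
      exacts [i.elim0, rfl]
    rwa [signEq_image_rename, hcomp, hcomp] at hxy
  | succ d ih =>
    let split : Fin (d + 1) ⊕ σ → Option (Fin d ⊕ σ) :=
      Sum.elim (Fin.cons none (some ∘ Sum.inl)) (some ∘ Sum.inr)
    have hsplit (v : ℝ) (u : Fin d → ℝ) (x : σ → ℝ) :
        (Option.elim · v (Sum.elim u x)) ∘ split = Sum.elim (Fin.cons v u : Fin (d + 1) → ℝ) x := by
      ext (i | s)
      · cases i using Fin.cases <;> rfl
      · rfl
    obtain ⟨𝒬₁, h₁, hlift₁⟩ := (h.image_rename split).exists_eliminate_option hT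
    obtain ⟨𝒬₂, h₂, hlift₂⟩ := ih (hT.trans (Nat.le_self_pow (by norm_num) T)) h₁
    refine ⟨𝒬₂, by rwa [pow_succ', pow_mul], fun x y hxy u ↦ ?_⟩
    obtain ⟨w, hw⟩ := hlift₂ x y hxy (Fin.tail u)
    obtain ⟨v, hv⟩ := hlift₁ _ _ hw (u 0)
    rw [signEq_image_rename, hsplit, hsplit, Fin.cons_self_tail] at hv
    exact ⟨Fin.cons v w, hv⟩

end Projection

section DefinedByPolys

theorem definedByPolys_of_signEq_imp {M : ℕ} {S : Set (Fin M → ℝ)}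
    {𝒬 : Finset (MvPolynomial (Fin M) ℝ)} {t : ℝ} (hdeg : ∀ q ∈ 𝒬, (q.totalDegree : ℝ) ≤ t)
    (h : ∀ x y, SignEq 𝒬 x y → x ∈ S → y ∈ S) :
    DefinedByPolys S (2 * 𝒬.card) t := by
  let atoms : Fin (2 * 𝒬.card) ≃ Bool × 𝒬 :=
    finProdFinEquiv.symm.trans (finTwoEquiv.prodCongr 𝒬.equivFin.symm)
  let holds (x : Fin M → ℝ) (c : Bool × 𝒬) : Prop :=
    if c.1 then eval x c.2.1 < 0 else eval x c.2.1 = 0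
  refine ⟨fun i ↦ (atoms i).2, fun i ↦ (atoms i).1,
    fun P ↦ ∃ y ∈ S, ∀ i, P i ↔ holds y (atoms i), fun i ↦ hdeg _ (atoms i).2.2, ?_⟩
  refine Set.Subset.antisymm (fun x hx ↦ ⟨x, hx, fun i ↦ Iff.rfl⟩) ?_
  rintro x ⟨y, hy, hyx⟩
  refine h y x (fun q hq ↦ ?_) hy
  have hiff (c : Bool × 𝒬) : holds x c ↔ holds y c := by
    simpa [holds] using hyx (atoms.symm c)
  have hneg : eval x q < 0 ↔ eval y q < 0 := hiff (true, ⟨q, hq⟩)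
  have hzero : eval x q = 0 ↔ eval y q = 0 := by simpa [holds] using hiff (false, ⟨q, hq⟩)
  have hpos : 0 < eval x q ↔ 0 < eval y q := by grind
  simp only [sign_apply, hpos, hneg]

theorem DefinedByPolys.mono {M L : ℕ} {S : Set (Fin M → ℝ)} {s t : ℝ} (hst : s ≤ t)
    (h : DefinedByPolys S L s) : DefinedByPolys S L t :=
  let ⟨Q, τ, φ, hdeg, hS⟩ := h
  ⟨Q, τ, φ, fun i ↦ (hdeg i).trans hst, hS⟩

theorem exists_eval_sumElim_eq_eval_linearMap {σ τ : Type*} [Finite τ]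
    (P : (τ → ℝ) →ₗ[ℝ] MvPolynomial σ ℝ) {n : ℕ}
    (hP : ∀ x, (P x).totalDegree ≤ n) :
    ∃ Q : MvPolynomial (σ ⊕ τ) ℝ, Q.totalDegree ≤ n + 1 ∧
      ∀ u x, eval (Sum.elim u x) Q = eval u (P x) := by
  classical
  have := Fintype.ofFinite τ
  refine ⟨∑ i, rename Sum.inl (P fun j ↦ if i = j then 1 else 0) * X (Sum.inr i), ?_, fun u x ↦ ?_⟩
  · refine totalDegree_finsetSum_le fun i _ ↦ (totalDegree_mul _ _).trans ?_
    exact add_le_add ((totalDegree_rename_le _ _).trans (hP _)) (totalDegree_X _).le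
  · rw [P.pi_apply_eq_sum_univ x]
    simp [eval_rename, mul_comm]

theorem exists_definedByPolys_image_sign_eval {κ E : Type*} [Fintype κ] [AddCommGroup E]
    [Module ℝ E] {d M T : ℕ} (hT : 2 ≤ T) (hκ : Fintype.card κ ≤ 2 ^ T)
    {P : κ → E →ₗ[ℝ] MvPolynomial (Fin d) ℝ} (hP : ∀ i x, (P i x).totalDegree + 1 ≤ T)
    (e : E ≃ₗ[ℝ] (Fin M → ℝ)) (Φ : (κ → SignType) → Prop) :
    ∃ L : ℕ, L ≤ 2 * 2 ^ T ^ 9 ^ d ∧ DefinedByPolys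
      (e '' {x | ∃ u, Φ fun i ↦ SignType.sign (eval u (P i x))}) L (T ^ 9 ^ d : ℕ) := by
  classical
  choose Q hdeg heval using fun i ↦
    exists_eval_sumElim_eq_eval_linearMap (P i ∘ₗ e.symm.toLinearMap) (n := T - 1)
      fun x ↦ Nat.le_sub_one_of_lt (hP i (e.symm x))
  have hcomplexity : ComplexityLE (Finset.univ.image Q) T :=
    ⟨Finset.card_image_le.trans hκ, Finset.forall_mem_image.mpr fun i _ ↦
      (hdeg i).trans_eq (Nat.sub_add_cancel (one_le_two.trans hT))⟩
  obtain ⟨𝒬, h𝒬, hlift⟩ := hcomplexity.exists_eliminate hT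
  refine ⟨2 * 𝒬.card, Nat.mul_le_mul_left 2 h𝒬.card_le, definedByPolys_of_signEq_imp
    (fun q hq ↦ mod_cast h𝒬.totalDegree_le q hq) ?_⟩
  rintro _ y hxy ⟨x, ⟨u, hu⟩, rfl⟩
  obtain ⟨u', hu'⟩ := hlift (e x) y hxy u
  have hsign (i) : SignType.sign (eval u (P i x)) =
      SignType.sign (eval u' (P i (e.symm y))) := by
    simpa [heval] using hu' (Q i) (Finset.mem_image_of_mem Q (Finset.mem_univ i))
  exact ⟨e.symm y, ⟨u', by simpa only [hsign] using hu⟩, e.apply_symm_apply y⟩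

end DefinedByPolys

section Numerics

theorem lt_choose_add_self {d : ℕ} (hd : 1 ≤ d) (m : ℕ) : m < (m + d).choose d :=
  calc m < (m + 1).choose 1 := by simp
    _ = (m + 1).choose m := Nat.choose_symm_add.symm
    _ ≤ (m + d).choose m := Nat.choose_le_choose m (Nat.add_le_add_left hd m)
    _ = (m + d).choose d := Nat.choose_symm_add

theorem le_of_two_pow_le_two_rpow_div {b d k : ℕ} (hd : 1 ≤ d)
    (h : (2 : ℝ) ^ b ≤ 2 ^ ((k : ℝ) / d)) : b ≤ k := by
  rw [← Real.rpow_natCast, Real.rpow_le_rpow_left_iff one_lt_two] at h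
  exact_mod_cast h.trans (div_le_self k.cast_nonneg (mod_cast hd))

theorem add_le_two_pow_two_pow_succ {b k : ℕ} (h : b ≤ k) : b + k ≤ 2 ^ 2 ^ (k + 1) := by
  have hk : k < 2 ^ k := Nat.lt_two_pow_self
  have hk' : 2 ^ (k + 1) < 2 ^ 2 ^ (k + 1) := Nat.lt_two_pow_self
  omega

theorem two_pow_succ_pow_add_one_le {k n : ℕ} (hk : 1 ≤ k) (hn : 1 ≤ n) :
    (2 ^ (k + 1)) ^ n + 1 ≤ 2 ^ (3 * k * n) :=
  calc (2 ^ (k + 1)) ^ n + 1 ≤ (2 ^ (k + 1)) ^ n + (2 ^ (k + 1)) ^ n := by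
        gcongr
        exact Nat.one_le_pow _ _ (by positivity)
    _ = 2 ^ ((k + 1) * n + 1) := by ring
    _ ≤ 2 ^ (3 * k * n) := by
        refine Nat.pow_le_pow_right two_pos ?_
        nlinarith [Nat.mul_le_mul hk hn]

theorem two_pow_succ_pow_add_one_le_rpow {d k n : ℕ} (hd : 1 ≤ d) (hk : 1 ≤ k) (hn : 1 ≤ n) :
    (((2 ^ (k + 1)) ^ n : ℕ) : ℝ) + 1 ≤ (2 ^ ((k : ℝ) / d)) ^ (3 * d * n : ℝ) :=
  calc (((2 ^ (k + 1)) ^ n : ℕ) : ℝ) + 1 ≤ 2 ^ (3 * k * n) :=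
        mod_cast two_pow_succ_pow_add_one_le hk hn
    _ = (2 ^ ((k : ℝ) / d)) ^ (3 * d * n : ℝ) := by
        rw [← Real.rpow_mul zero_le_two, ← Real.rpow_natCast]
        congr 1
        push_cast
        field_simp

theorem two_mul_two_pow_le_exp (n : ℕ) : 2 * (2 : ℝ) ^ n ≤ Real.exp (n + 1) := by
  rw [← pow_succ', ← Nat.cast_add_one, ← Real.exp_one_pow]
  gcongr
  linarith [Real.add_one_le_exp 1]

end Numerics

theorem WG_semialgebraic_low_complexity_general (b d : ℕ) (hd : 1 ≤ d) :
    ∃ C : ℝ, 0 < C ∧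
      ∀ (k : ℕ), 1 ≤ k →
      ∀ D : ℝ, D = 2 ^ ((k : ℝ) / (d : ℝ)) → (2 : ℝ) ^ b ≤ D →
      ∀ (E : Type*) [AddCommGroup E] [Module ℝ E]
        (P : Fin b → E →ₗ[ℝ] MvPolynomial (Fin d) ℝ) (Q : Fin k → E →ₗ[ℝ] MvPolynomial (Fin d) ℝ),
        (∀ i x, (P i x).totalDegree ≤ b) →
        (∀ j x, (Q j x).totalDegree ≤ 2 ^ k) →
      ∀ (G : (Fin b → Prop) → Prop) (M : ℕ) (e : E ≃ₗ[ℝ] (Fin M → ℝ)),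
        ∃ L : ℕ, (L : ℝ) ≤ Real.exp (D ^ C) ∧
          DefinedByPolys
            (e '' {x | ({v : Fin d → ℝ | G fun i ↦ 0 ≤ eval v (P i x)} ∩
              {u : Fin d → ℝ | ∀ j, 0 < eval u (Q j x)}).Nonempty})
            L (D ^ (C * d)) := by
  refine ⟨3 * d * (9 ^ d : ℕ), by positivity, ?_⟩
  rintro k hk D rfl hbD E _ _ P Q hP hQ G M e
  have hbk : b ≤ k := le_of_two_pow_le_two_rpow_div hd hbD
  have hk2 : k < 2 ^ k := Nat.lt_two_pow_self
  have hdeg (c x) : (Sum.elim P Q c x).totalDegree + 1 ≤ 2 ^ (k + 1) := by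
    rcases c with i | j
    · have := hP i x
      rw [Sum.elim_inl, pow_succ]
      omega
    · have := hQ j x
      rw [Sum.elim_inr, pow_succ]
      omega
  obtain ⟨L, hL, hdef⟩ := exists_definedByPolys_image_sign_eval
    (Nat.le_self_pow k.succ_ne_zero 2) (by simpa using add_le_two_pow_two_pow_succ hbk) hdeg e
    fun s ↦ (G fun i ↦ 0 ≤ s (Sum.inl i)) ∧ ∀ j, s (Sum.inr j) = 1
  have hT := two_pow_succ_pow_add_one_le_rpow hd hk (Nat.one_le_pow d 9 (by norm_num))
  refine ⟨L, ?_, ?_⟩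
  · calc (L : ℝ) ≤ 2 * 2 ^ (2 ^ (k + 1)) ^ 9 ^ d := mod_cast hL
      _ ≤ _ := two_mul_two_pow_le_exp _
      _ ≤ _ := Real.exp_le_exp.mpr hT
  · simp only [Sum.elim_inl, Sum.elim_inr, sign_nonneg_iff, sign_eq_one_iff] at hdef
    refine DefinedByPolys.mono ((le_add_of_nonneg_right zero_le_one).trans (hT.trans ?_)) hdef
    refine Real.rpow_le_rpow_of_exponent_le (Real.one_le_rpow one_le_two (by positivity)) ?_
    exact le_mul_of_one_le_right (by positivity) (mod_cast hd)

/-- **Complexity of the incidence set `W_G`.** Fix `b, d ≥ 1` and a Boolean function `G`. A point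
`x = (q_1,…,q_b)` of `𝕏 = (ℝ^{binom(b+d,d)})^b` is identified (via an injective linear map `ι`
onto the polynomials of degree at most `b`) with the semi-algebraic set
`Z_{x,G} = {v : G(ι(q_1)(v) ≥ 0,…,ι(q_b)(v) ≥ 0)}`, and a point `y` of `𝕐_k = 𝕍_1 × ⋯ × 𝕍_k`
with the set `S_y = {u : P_1(u) > 0,…,P_k(u) > 0}`. Then, for `D = 2^{k/d} ≥ 2^b`, the set
`W_G = {(x,y) : Z_{x,G} ∩ S_y ≠ ∅}` is semi-algebraic (in any linear coordinate system on
`𝕏 × 𝕐_k`), defined by at most `e^{D^C}` polynomials, each of degree at most `D^{C·d}`,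
where `C = C(b,d)`. -/
theorem WG_semialgebraic_low_complexity (b d : ℕ) (hb : 1 ≤ b) (hd : 1 ≤ d) :
    ∃ C : ℝ, 0 < C ∧
      ∀ (k : ℕ), 1 ≤ k →
      ∀ D : ℝ, D = 2 ^ ((k : ℝ) / (d : ℝ)) → (2 : ℝ) ^ b ≤ D →
      -- identification of coefficient vectors with the polynomials of degree at most `b`
      ∀ ι : (Fin (Nat.choose (b + d) d) → ℝ) →ₗ[ℝ] MvPolynomial (Fin d) ℝ,
        Function.Injective ι →
        Set.range ι = {p : MvPolynomial (Fin d) ℝ | p.totalDegree ≤ b} →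
      -- `Dj j` is the least positive integer with `binom(Dj j + d, d) > 2^{j-1}`
      ∀ Dj : Fin k → ℕ,
        (∀ j : Fin k,
          IsLeast {m : ℕ | 0 < m ∧ 2 ^ (j : ℕ) < Nat.choose (m + d) d} (Dj j)) →
      -- the `2^{j-1}`-dimensional subspaces `𝕍_j` of polynomials of degree at most `Dj j`
      ∀ V : Fin k → Submodule ℝ (MvPolynomial (Fin d) ℝ),
        (∀ j, Module.finrank ℝ (V j) = 2 ^ (j : ℕ)) →
        (∀ j, ∀ p ∈ V j, p.totalDegree ≤ Dj j) →
      ∀ G : (Fin b → Prop) → Prop,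
      ∀ (M : ℕ)
        (e : ((Fin b → Fin (Nat.choose (b + d) d) → ℝ) × ((j : Fin k) → V j)) ≃ₗ[ℝ]
            (Fin M → ℝ)),
        ∃ L : ℕ, (L : ℝ) ≤ Real.exp (D ^ C) ∧
          DefinedByPolys
            ((⇑e) '' {xy : (Fin b → Fin (Nat.choose (b + d) d) → ℝ) × ((j : Fin k) → V j) |
              ({v : Fin d → ℝ | G fun i => 0 ≤ eval v (ι (xy.1 i))} ∩
               {u : Fin d → ℝ | ∀ j : Fin k,
                  0 < eval u ((xy.2 j : MvPolynomial (Fin d) ℝ))}).Nonempty})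
            L (D ^ (C * d)) := by
  obtain ⟨C, hC, h⟩ := WG_semialgebraic_low_complexity_general b d hd
  refine ⟨C, hC, fun k hk D hD hbD ι _ hι Dj hDj V _ hV G M e ↦ ?_⟩
  let 𝕏 := Fin b → Fin (Nat.choose (b + d) d) → ℝ
  let 𝕐 := (j : Fin k) → V j
  let P (i : Fin b) : 𝕏 × 𝕐 →ₗ[ℝ] MvPolynomial (Fin d) ℝ := ι ∘ₗ .proj i ∘ₗ .fst ℝ 𝕏 𝕐
  let Q (j : Fin k) : 𝕏 × 𝕐 →ₗ[ℝ] MvPolynomial (Fin d) ℝ :=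
    (V j).subtype ∘ₗ .proj j ∘ₗ .snd ℝ 𝕏 𝕐
  refine h k hk D hD hbD (𝕏 × 𝕐) P Q (fun i x ↦ hι.subset ⟨x.1 i, rfl⟩) (fun j x ↦ ?_) G M e
  have hDj_le : Dj j ≤ 2 ^ (j : ℕ) := (hDj j).2 ⟨by positivity, lt_choose_add_self hd _⟩
  exact (hV j _ (x.2 j).2).trans (hDj_le.trans (Nat.pow_le_pow_right two_pos j.is_lt.le))
end
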